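/- For all reals 1 < a < b, the limit as R → ∞ of μ1{ α ∈ (0,1) irrational : a < q_{n_R(α)}(α)/R < b } exists and equals (∫_D φ dμ2)^{−1} · ∫_D ( max(0, φ(x,y) − ln a) − max(0, φ(x,y) − ln b) ) dμ2(x,y). -/

import Mathlib

open MeasureTheory Filter Set Topology

noncomputable section

/-- The Gauss map `x ↦ {1/x}`. -/
def gaussMap (x : ℝ) : ℝ := Int.fract (1 / x)

/-- The `n`-th partial quotient (1-indexed) of the continued fraction expansion of `α`:
`pq α n = ⌊1 / 𝒢^{n-1} α⌋`. -/
def pq (α : ℝ) (n : ℕ) : ℕ := ⌊1 / gaussMap^[n - 1] α⌋₊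

/-- Denominators of the convergents attached to a (1-indexed) sequence of partial quotients:
`q 0 = 1`, `q 1 = b 1`, `q (n+2) = b (n+2) * q (n+1) + q n`. -/
def qden (b : ℕ → ℕ) : ℕ → ℕ
  | 0 => 1
  | 1 => b 1
  | n + 2 => b (n + 2) * qden b (n + 1) + qden b n

/-- Numerators of the convergents attached to a (1-indexed) sequence of partial quotients:
`p 0 = 0`, `p 1 = 1`, `p (n+2) = b (n+2) * p (n+1) + p n`. -/
def pnum (b : ℕ → ℕ) : ℕ → ℕ
  | 0 => 0
  | 1 => 1
  | n + 2 => b (n + 2) * pnum b (n + 1) + pnum b n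

/-- `n_R(α)`: the first index `n` with `q_n(α) > R`. -/
def nIndex (α : ℝ) (R : ℝ) : ℕ := sInf {n : ℕ | R < (qden (pq α) n : ℝ)}

/-- The Gauss measure on `(0,1)`, with density `1 / (ln 2 · (1 + x))`. -/
def gaussMeasure : Measure ℝ :=
  (volume.restrict (Ioo (0 : ℝ) 1)).withDensity fun x =>
    ENNReal.ofReal (1 / (Real.log 2 * (1 + x)))

/-- The domain `D = ((0,1) ∖ ℚ) × ((0,1) ∖ ℚ)` of the natural extension of the Gauss map. -/
def Dset : Set (ℝ × ℝ) :=
  {p | p.1 ∈ Ioo (0 : ℝ) 1 ∧ Irrational p.1 ∧ p.2 ∈ Ioo (0 : ℝ) 1 ∧ Irrational p.2}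

/-- The invariant measure `μ₂` on `D`, with density `1 / (ln 2 · (1 + x y)²)`. -/
def mu2 : Measure (ℝ × ℝ) :=
  (volume.restrict Dset).withDensity fun p =>
    ENNReal.ofReal (1 / (Real.log 2 * (1 + p.1 * p.2) ^ 2))

/-- The roof function `φ(x, y) = ln (⌊1/y⌋ + x)`. -/
def roof (p : ℝ × ℝ) : ℝ := Real.log ((⌊1 / p.2⌋ : ℝ) + p.1)

/-- The natural extension of the Gauss map,
`Ĝ(x, y) = (1 / (⌊1/y⌋ + x), 1/y − ⌊1/y⌋)`. -/
def GhatMap (p : ℝ × ℝ) : ℝ × ℝ := (1 / ((⌊1 / p.2⌋ : ℝ) + p.1), Int.fract (1 / p.2))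

/-- Birkhoff sums `S_r φ(p) = ∑_{i<r} φ(Ĝ^i p)` of the roof function under `Ĝ`. -/
def birk (p : ℝ × ℝ) (r : ℕ) : ℝ := ∑ i ∈ Finset.range r, roof (GhatMap^[i] p)

/-- `r(p, T)`: the first `r` with `S_r φ(p) > T`. -/
def rTime (p : ℝ × ℝ) (T : ℝ) : ℕ := sInf {r : ℕ | T < birk p r}

/-- Value of a finite continued fraction `[b₁, b₂, …, bₘ] = 1/(b₁ + 1/(b₂ + ⋯ + 1/bₘ))`,
entries given as a list. -/
def cfList : List ℝ → ℝ
  | [] => 0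
  | b :: t => 1 / (b + cfList t)

/-- The `m`-th truncation `[b 1, b 2, …, b m]` of an infinite continued fraction. -/
def cfTrunc (b : ℕ → ℝ) (m : ℕ) : ℝ := cfList ((List.range m).map fun i => b (i + 1))

/-- Value of the infinite continued fraction `[b 1, b 2, …]`, i.e. the limit of its finite
truncations. -/
def cfVal (b : ℕ → ℝ) : ℝ := limUnder atTop fun m => cfTrunc b m

/-- The finite continued fraction on the reversed word,
`cfRev b k = [b k; b (k-1), …, b 1] = b k + 1/(b (k-1) + ⋯ + 1/(b 1))`. -/
def cfRev (b : ℕ → ℝ) (k : ℕ) : ℝ :=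
  b k + cfList ((List.range (k - 1)).map fun i => b (k - 1 - i))

/-- For a bi-infinite sequence `a : ℤ → ℕ` of partial quotients,
`fn a n = ln q_n − ∑_{k=1}^n ln [a_k; a_{k-1}, a_{k-2}, …]`. -/
def fn (a : ℤ → ℕ) (n : ℕ) : ℝ :=
  Real.log (qden (fun k => a (k : ℤ)) n : ℝ) -
    ∑ k ∈ Finset.Icc 1 n,
      Real.log ((a (k : ℤ) : ℝ) + cfVal fun j => (a ((k : ℤ) - (j : ℤ)) : ℝ))

/-- The bi-sided cylinder of length `n` in `D` prescribing the sequence coordinates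
`a_k = b k` for `−n ≤ k ≤ n` (where `a_k`, `k ≥ 1`, are the partial quotients of the second
coordinate and `a_{−j}`, `j ≥ 0`, are the partial quotients of the first coordinate). -/
def cylinder (n : ℕ) (b : ℤ → ℕ) : Set (ℝ × ℝ) :=
  {p ∈ Dset | (∀ k : ℕ, 1 ≤ k → k ≤ n → pq p.2 k = b (k : ℤ)) ∧
    ∀ j : ℕ, j ≤ n → pq p.1 (j + 1) = b (-(j : ℤ))}

/-- The phase space of the special flow over `Ĝ` with roof function `φ`. -/
def DPhi : Set ((ℝ × ℝ) × ℝ) := {q | q.1 ∈ Dset ∧ 0 ≤ q.2 ∧ q.2 < roof q.1}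

/-- The invariant probability measure `μ₃` of the special flow. -/
def mu3 : Measure ((ℝ × ℝ) × ℝ) :=
  (ENNReal.ofReal (∫ p, roof p ∂mu2))⁻¹ • ((mu2.prod volume).restrict DPhi)

/-- The special flow `Φ_t` (for `t ≥ 0`) built over `Ĝ` with roof function `φ`:
`Φ_t(p, s) = (Ĝ^{r-1} p, s + t − S_{r-1} φ(p))` where `r = r(p, s + t)`. -/
def flowMap (t : ℝ) (q : (ℝ × ℝ) × ℝ) : (ℝ × ℝ) × ℝ :=
  (GhatMap^[rTime q.1 (q.2 + t) - 1] q.1,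
    q.2 + t - birk q.1 (rTime q.1 (q.2 + t) - 1))

end

/-!
If `n = q_{n_R}(α)` and `q` is the preceding denominator, then `q ≤ R < n`, and up to the symmetry
`α ↦ 1 - α` the numbers `α` with this pair of consecutive denominators form an interval of length
`1 / (n (n + q))` with an end point at `q⁻¹ mod n`, divided by `n`. Hence the set
`a < q_{n_R} / R < b` is a disjoint union of such intervals over the primitive lattice points
`(n, q)` with `q ≤ R < n` and `a R < n < b R`.

For fixed `n` the fractions `(q⁻¹ mod n) / n` equidistribute as `q` runs through an interval of
length proportional to `n`: by Weyl's criterion this follows from a nontrivial bound for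
incomplete Kloosterman sums, for which Kloosterman's fourth moment argument is enough. So the
Gauss measure of the union has the same limit as its length, and counting primitive points by
Möbius inversion evaluates the latter as `12 / π² * ∫ log (1 + 1 / s) / s` over `[a, b]`.

On the other side, `μ₂ {φ > t} = log (1 + e⁻ᵗ) / log 2` for `t ≥ 0`, and the layer cake formula
turns both integrals of `φ` into integrals of this tail.
-/

namespace ConvergentDenominators

/-! ### Divisor bounds -/

lemma exists_succ_pow_le_mul_two_pow (k : ℕ) : ∃ C : ℕ, ∀ e : ℕ, (e + 1) ^ k ≤ C * 2 ^ e := by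
  have h : Tendsto (fun e : ℕ => (((e + 1 : ℕ) : ℝ)) ^ k / 2 ^ (e + 1)) atTop (𝓝 0) :=
    (tendsto_pow_const_div_const_pow_of_one_lt k one_lt_two).comp (tendsto_add_atTop_nat 1)
  obtain ⟨B, hB⟩ := h.bddAbove_range
  refine ⟨⌈2 * B⌉₊, fun e => ?_⟩
  have he : (((e + 1 : ℕ) : ℝ)) ^ k ≤ 2 * B * 2 ^ e := by
    have := (div_le_iff₀ (by positivity)).1 (hB ⟨e, rfl⟩)
    rw [pow_succ] at this
    linarith
  have hC : 2 * B * 2 ^ e ≤ ⌈2 * B⌉₊ * (2 : ℝ) ^ e := by gcongr; exact Nat.le_ceil _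
  exact_mod_cast he.trans hC

/-- The primes below `2 ^ k` each contribute a bounded factor; for the others
`(e + 1) ^ k ≤ 2 ^ (k * e) ≤ p ^ e`. -/
lemma exists_card_divisors_pow_le (k : ℕ) :
    ∃ C : ℕ, ∀ n : ℕ, n ≠ 0 → n.divisors.card ^ k ≤ C * n := by
  obtain ⟨C, hC⟩ := exists_succ_pow_le_mul_two_pow k
  have hC1 : 1 ≤ C := by simpa using hC 0
  have large : ∀ p : ℕ, 2 ^ k ≤ p → ∀ e : ℕ, (e + 1) ^ k ≤ p ^ e := fun p hp e =>
    calc (e + 1) ^ k ≤ (2 ^ e) ^ k := Nat.pow_le_pow_left Nat.lt_two_pow_self k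
      _ = (2 ^ k) ^ e := by rw [← pow_mul, ← pow_mul, mul_comm]
      _ ≤ p ^ e := Nat.pow_le_pow_left hp e
  refine ⟨C ^ 2 ^ k, fun n hn => ?_⟩
  have local_bound : ∀ p ∈ n.primeFactors, (n.factorization p + 1) ^ k ≤
      (if p < 2 ^ k then C else 1) * p ^ n.factorization p := by
    intro p hp
    split_ifs with h
    · exact (hC _).trans (Nat.mul_le_mul_left _
        (Nat.pow_le_pow_left (Nat.prime_of_mem_primeFactors hp).two_le _))
    · rw [one_mul]
      exact large p (not_lt.1 h) _
  calc n.divisors.card ^ k = ∏ p ∈ n.primeFactors, (n.factorization p + 1) ^ k := by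
        rw [Nat.card_divisors hn, ← Finset.prod_pow]
    _ ≤ ∏ p ∈ n.primeFactors, ((if p < 2 ^ k then C else 1) * p ^ n.factorization p) :=
        Finset.prod_le_prod' local_bound
    _ = C ^ (n.primeFactors.filter (· < 2 ^ k)).card * n := by
        rw [Finset.prod_mul_distrib, Finset.prod_ite, Finset.prod_const, Finset.prod_const_one,
          mul_one]
        congr 1
        exact Nat.prod_factorization_pow_eq_self hn
    _ ≤ C ^ 2 ^ k * n := by
        gcongr
        refine (Finset.card_le_card fun p hp => ?_).trans (Finset.card_range (2 ^ k)).le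
        exact Finset.mem_range.2 (Finset.mem_filter.1 hp).2

lemma le_totient_mul_card_divisors (n : ℕ) : n ≤ n.totient * n.divisors.card := by
  calc n = ∑ d ∈ n.divisors, d.totient := (Nat.sum_totient n).symm
    _ ≤ ∑ _d ∈ n.divisors, n.totient := Finset.sum_le_sum fun d hd =>
        Nat.le_of_dvd (Nat.totient_pos.2 (Nat.pos_of_mem_divisors
          (Nat.mem_divisors_self n (Nat.ne_zero_of_mem_divisors hd))))
          (Nat.totient_dvd_of_dvd (Nat.dvd_of_mem_divisors hd))
    _ = n.totient * n.divisors.card := by rw [Finset.sum_const, smul_eq_mul, mul_comm]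

lemma sum_range_gcd_le (n : ℕ) : ∑ i ∈ Finset.range n, n.gcd i ≤ n * n.divisors.card := by
  have gcd_mem : ∀ i ∈ Finset.range n, n.gcd i ∈ n.divisors := fun i hi =>
    Nat.mem_divisors.2 ⟨Nat.gcd_dvd_left n i, (Nat.zero_lt_of_lt (Finset.mem_range.1 hi)).ne'⟩
  calc ∑ i ∈ Finset.range n, n.gcd i
      = ∑ d ∈ n.divisors, ∑ i ∈ Finset.range n with n.gcd i = d, n.gcd i :=
        (Finset.sum_fiberwise_of_maps_to gcd_mem _).symm
    _ = ∑ d ∈ n.divisors, (n / d).totient * d := Finset.sum_congr rfl fun d hd => by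
        rw [Nat.totient_div_of_dvd (Nat.dvd_of_mem_divisors hd)]
        exact Finset.sum_const_nat fun i hi => (Finset.mem_filter.1 hi).2
    _ ≤ ∑ _d ∈ n.divisors, n := Finset.sum_le_sum fun d _ =>
        (Nat.mul_le_mul_right d (Nat.totient_le _)).trans (Nat.div_mul_le_self n d)
    _ = n * n.divisors.card := by rw [Finset.sum_const, smul_eq_mul, mul_comm]

/-! ### Kloosterman sums -/

section Kloosterman

variable (n : ℕ) [NeZero n]

lemma sum_gcd_val_le : ∑ v : ZMod n, n.gcd v.val ≤ n * n.divisors.card := by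
  refine le_of_eq_of_le ?_ (sum_range_gcd_le n)
  refine Finset.sum_bij (fun v _ => v.val) (fun v _ => Finset.mem_range.2 v.val_lt)
    (fun _ _ _ _ h => ZMod.val_injective n h) (fun i hi => ?_) (fun _ _ => rfl)
  exact ⟨i, Finset.mem_univ _, ZMod.val_cast_of_lt (Finset.mem_range.1 hi)⟩

lemma exists_mul_eq_gcd_val (v : ZMod n) : ∃ s : ZMod n, s * v = (n.gcd v.val : ℕ) := by
  refine ⟨Nat.gcdB n v.val, ?_⟩
  have bezout := congrArg (Int.cast : ℤ → ZMod n) (Nat.gcd_eq_gcd_ab n v.val)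
  push_cast at bezout
  rw [bezout]
  simp [mul_comm]

variable {n} in
lemma card_filter_mul_eq_le {c s : ZMod n} {m : ℕ} (hm : 0 < m) (hs : s * c = m) (y : ZMod n) :
    (Finset.univ.filter fun x : ZMod n => c * x = y).card ≤ m := by
  obtain h | ⟨x₀, hx₀⟩ := (Finset.univ.filter fun x : ZMod n => c * x = y).eq_empty_or_nonempty
  · simp [h]
  refine le_trans (Finset.card_le_card_of_injOn (· - x₀) (fun x hx => ?_)
    (fun _ _ _ _ h => sub_left_injective h)) (IsAddCyclic.card_nsmul_eq_zero_le (α := ZMod n) hm)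
  simp only [Finset.coe_filter, Finset.mem_filter, Finset.mem_univ, true_and,
    Set.mem_ofPred_eq] at hx hx₀ ⊢
  rw [nsmul_eq_mul, ← hs, mul_assoc, mul_sub, hx, hx₀, sub_self, mul_zero]

/-- The quadruples `((x₁, x₂), (x₃, x₄))` of units modulo `n` with `x₁ + x₂ = x₃ + x₄` and
`x₁⁻¹ + x₂⁻¹ = x₃⁻¹ + x₄⁻¹`, which the fourth moment of Kloosterman sums counts. -/
def balancedQuadruples : Finset (((ZMod n)ˣ × (ZMod n)ˣ) × ((ZMod n)ˣ × (ZMod n)ˣ)) :=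
  Finset.univ.filter fun p => ((p.1.1 : ZMod n) + p.1.2 = p.2.1 + p.2.2) ∧
    ((↑p.1.1⁻¹ : ZMod n) + ↑p.1.2⁻¹ = ↑p.2.1⁻¹ + ↑p.2.2⁻¹)

variable {n} in
/-- Eliminating `x₂` leaves a linear equation for `x₁` in terms of the differences
`v = x₁ - x₃` and `w = x₁ - x₄`, namely `2 v w x₁ = v w (v + w)`. -/
lemma mul_eq_of_mem_balancedQuadruples {p : ((ZMod n)ˣ × (ZMod n)ˣ) × ((ZMod n)ˣ × (ZMod n)ˣ)}
    (hp : p ∈ balancedQuadruples n) :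
    2 * ((p.1.1 : ZMod n) - p.2.1) * (p.1.1 - p.2.2) * p.1.1 =
      (p.1.1 - p.2.1) * (p.1.1 - p.2.2) * ((p.1.1 - p.2.1) + (p.1.1 - p.2.2)) := by
  obtain ⟨⟨x₁, x₂⟩, x₃, x₄⟩ := p
  obtain ⟨-, sum_eq, inv_sum_eq⟩ := Finset.mem_filter.1 hp
  dsimp only at sum_eq inv_sum_eq ⊢
  have sum_eq_mul (x y : (ZMod n)ˣ) :
      (x : ZMod n) + y = ((↑x⁻¹ : ZMod n) + ↑y⁻¹) * (x * y) := by
    linear_combination (-y : ZMod n) * x.inv_mul - x * y.inv_mul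
  have cross : ((x₁ : ZMod n) + x₂) * (x₃ * x₄) = (x₃ + x₄) * (x₁ * x₂) := by
    rw [sum_eq_mul x₁, sum_eq_mul x₃, inv_sum_eq]
    ring
  have hx₂ : (x₂ : ZMod n) = x₃ + x₄ - x₁ := by linear_combination sum_eq
  rw [hx₂] at cross
  linear_combination cross

lemma card_balancedQuadruples_le_sum : (balancedQuadruples n).card ≤
    ∑ d : ZMod n × ZMod n,
      (Finset.univ.filter fun x : ZMod n => 2 * d.1 * d.2 * x = d.1 * d.2 * (d.1 + d.2)).card := by
  rw [← Finset.card_sigma]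
  refine Finset.card_le_card_of_injOn
    (fun p => ⟨((p.1.1 : ZMod n) - p.2.1, (p.1.1 : ZMod n) - p.2.2), (p.1.1 : ZMod n)⟩)
    (fun p hp => ?_) ?_
  · simpa using mul_eq_of_mem_balancedQuadruples hp
  · rintro ⟨⟨x₁, x₂⟩, x₃, x₄⟩ hx ⟨⟨y₁, y₂⟩, y₃, y₄⟩ hy hxy
    have hx_sum := (Finset.mem_filter.1 hx).2.1
    have hy_sum := (Finset.mem_filter.1 hy).2.1
    simp only [Sigma.mk.injEq, Prod.mk.injEq, heq_eq_eq] at hxy hx_sum hy_sum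
    obtain ⟨⟨h₃, h₄⟩, h₁⟩ := hxy
    obtain rfl : x₁ = y₁ := Units.ext h₁
    obtain rfl : x₃ = y₃ := Units.ext (by linear_combination -h₃)
    obtain rfl : x₄ = y₄ := Units.ext (by linear_combination -h₄)
    obtain rfl : x₂ = y₂ := Units.ext (by linear_combination hx_sum - hy_sum)
    rfl

lemma card_balancedQuadruples_le :
    (balancedQuadruples n).card ≤ 2 * (n * n.divisors.card) ^ 2 := by
  have gcd_pos (v : ZMod n) : 0 < n.gcd v.val := Nat.gcd_pos_of_pos_left _ (NeZero.pos n)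
  calc (balancedQuadruples n).card
      ≤ ∑ d : ZMod n × ZMod n, (Finset.univ.filter fun x : ZMod n =>
          2 * d.1 * d.2 * x = d.1 * d.2 * (d.1 + d.2)).card := card_balancedQuadruples_le_sum n
    _ ≤ ∑ d : ZMod n × ZMod n, 2 * (n.gcd d.1.val * n.gcd d.2.val) := by
        refine Finset.sum_le_sum fun ⟨v, w⟩ _ => ?_
        obtain ⟨s, hs⟩ := exists_mul_eq_gcd_val n v
        obtain ⟨t, ht⟩ := exists_mul_eq_gcd_val n w
        refine card_filter_mul_eq_le (s := s * t)
          (mul_pos two_pos (mul_pos (gcd_pos v) (gcd_pos w))) ?_ _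
        push_cast
        rw [← hs, ← ht]
        ring
    _ = 2 * (∑ v : ZMod n, n.gcd v.val) ^ 2 := by
        rw [← Finset.mul_sum, Fintype.sum_prod_type, sq, Finset.sum_mul_sum]
    _ ≤ 2 * (n * n.divisors.card) ^ 2 := by gcongr; exact sum_gcd_val_le n

lemma sum_stdAddChar_mul (x : ZMod n) :
    ∑ a : ZMod n, ZMod.stdAddChar (a * x) = if x = 0 then (n : ℂ) else 0 := by
  rw [AddChar.sum_mulShift x (ZMod.isPrimitive_stdAddChar n), ZMod.card, Nat.cast_ite,
    Nat.cast_zero]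

lemma sum_norm_sq_sum_stdAddChar {ι : Type*} [Fintype ι] (f g : ι → ZMod n) :
    ∑ a : ZMod n, ∑ b : ZMod n, ‖∑ i, ZMod.stdAddChar (a * f i + b * g i)‖ ^ 2 =
      (n : ℝ) ^ 2 *
        (Finset.univ.filter fun p : ι × ι => f p.1 = f p.2 ∧ g p.1 = g p.2).card := by
  have expand (a b : ZMod n) :
      ((‖∑ i, ZMod.stdAddChar (a * f i + b * g i)‖ ^ 2 : ℝ) : ℂ) =
        ∑ p : ι × ι, ZMod.stdAddChar (a * (f p.1 - f p.2)) *
          ZMod.stdAddChar (b * (g p.1 - g p.2)) := by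
    rw [Complex.ofReal_pow, ← Complex.mul_conj', map_sum, Finset.sum_mul_sum,
      Fintype.sum_prod_type]
    refine Finset.sum_congr rfl fun i _ => Finset.sum_congr rfl fun j _ => ?_
    rw [← AddChar.map_neg_eq_conj, ← AddChar.map_add_eq_mul, ← AddChar.map_add_eq_mul]
    congr 1
    ring
  refine Complex.ofReal_injective ?_
  push_cast [Finset.card_filter, ← Complex.ofReal_pow, expand]
  simp_rw [Finset.sum_comm (γ := ZMod n) (s := Finset.univ) (t := (Finset.univ : Finset (ι × ι))),
    ← Finset.mul_sum, sum_stdAddChar_mul, ← Finset.sum_mul, sum_stdAddChar_mul, Finset.mul_sum]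
  refine Finset.sum_congr rfl fun p _ => ?_
  simp only [sub_eq_zero]
  split_ifs <;> simp_all [sq]

/-- The Kloosterman sum `∑ e((h u + k u⁻¹) / n)` over the units `u` modulo `n`. -/
noncomputable def kloostermanSum (h k : ZMod n) : ℂ :=
  ∑ u : (ZMod n)ˣ, ZMod.stdAddChar (h * (u : ZMod n) + k * (↑u⁻¹ : ZMod n))

lemma sum_norm_kloostermanSum_pow_four_le :
    ∑ h : ZMod n, ∑ k : ZMod n, ‖kloostermanSum n h k‖ ^ 4 ≤
      (n : ℝ) ^ 2 * (2 * (n * n.divisors.card) ^ 2) := by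
  have square (h k : ZMod n) : ‖kloostermanSum n h k‖ ^ 4 =
      ‖∑ u : (ZMod n)ˣ × (ZMod n)ˣ, ZMod.stdAddChar
        (h * ((u.1 : ZMod n) + (u.2 : ZMod n)) +
          k * ((↑u.1⁻¹ : ZMod n) + (↑u.2⁻¹ : ZMod n)))‖ ^ 2 := by
    rw [show 4 = 2 * 2 from rfl, pow_mul, ← norm_pow, kloostermanSum, sq (∑ _, _),
      Finset.sum_mul_sum, Fintype.sum_prod_type]
    congr 2
    refine Finset.sum_congr rfl fun u _ => Finset.sum_congr rfl fun v _ => ?_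
    rw [← AddChar.map_add_eq_mul]
    congr 1
    ring
  simp_rw [square, sum_norm_sq_sum_stdAddChar]
  gcongr
  exact_mod_cast card_balancedQuadruples_le n

lemma kloostermanSum_mul_unit (h k : ZMod n) (u : (ZMod n)ˣ) :
    kloostermanSum n (h * u) (k * (↑u⁻¹ : ZMod n)) = kloostermanSum n h k := by
  unfold kloostermanSum
  rw [← Equiv.sum_comp (Equiv.mulLeft u)
    fun x : (ZMod n)ˣ => ZMod.stdAddChar (h * (x : ZMod n) + k * (↑x⁻¹ : ZMod n))]
  refine Finset.sum_congr rfl fun x _ => ?_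
  congr 1
  simp only [Equiv.coe_mulLeft, mul_inv, Units.val_mul]
  ring

lemma card_filter_intCast_mul_unit_eq_le {k : ℤ} (hk : k ≠ 0) (b : ZMod n) :
    (Finset.univ.filter fun u : (ZMod n)ˣ => (k : ZMod n) * u = b).card ≤ k.natAbs := by
  have sign_mul : ((k.sign : ℤ) : ZMod n) * k = (k.natAbs : ℕ) := by
    rw [← Int.cast_mul, Int.sign_mul_self_eq_natAbs, Int.cast_natCast]
  refine le_trans (Finset.card_le_card_of_injOn (fun u : (ZMod n)ˣ => (u : ZMod n))
    (fun u hu => ?_) fun _ _ _ _ h => Units.ext h)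
    (card_filter_mul_eq_le (Int.natAbs_pos.2 hk) sign_mul b)
  simpa using hu

/-- Since `K(h, k)` is unchanged along the orbit `(h u, k u⁻¹)`, a single large value would be
repeated `φ(n) / |k|` times in the fourth moment. -/
lemma totient_mul_norm_kloostermanSum_pow_four_le (h : ZMod n) {k : ℤ} (hk : k ≠ 0) :
    (n.totient : ℝ) * ‖kloostermanSum n h k‖ ^ 4 ≤
      k.natAbs * ((n : ℝ) ^ 2 * (2 * (n * n.divisors.card) ^ 2)) := by
  let M (b : ZMod n) : ℝ := ∑ a : ZMod n, ‖kloostermanSum n a b‖ ^ 4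
  have le_M (a b : ZMod n) : ‖kloostermanSum n a b‖ ^ 4 ≤ M b :=
    Finset.single_le_sum (f := fun a => ‖kloostermanSum n a b‖ ^ 4)
      (fun _ _ => by positivity) (Finset.mem_univ a)
  calc (n.totient : ℝ) * ‖kloostermanSum n h k‖ ^ 4
      = ∑ _u : (ZMod n)ˣ, ‖kloostermanSum n h k‖ ^ 4 := by
        rw [Finset.sum_const, Finset.card_univ, ZMod.card_units_eq_totient, nsmul_eq_mul]
    _ ≤ ∑ u : (ZMod n)ˣ, M (k * (↑u⁻¹ : ZMod n)) := Finset.sum_le_sum fun u _ => by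
        rw [← kloostermanSum_mul_unit n h k u]
        exact le_M _ _
    _ = ∑ u : (ZMod n)ˣ, M (k * (u : ZMod n)) :=
        Equiv.sum_comp (Equiv.inv (ZMod n)ˣ) fun u : (ZMod n)ˣ => M (k * (u : ZMod n))
    _ = ∑ b : ZMod n,
          (Finset.univ.filter fun u : (ZMod n)ˣ => (k : ZMod n) * u = b).card * M b := by
        rw [← Finset.sum_fiberwise _ fun u : (ZMod n)ˣ => (k : ZMod n) * u]
        refine Finset.sum_congr rfl fun b _ => ?_
        rw [← nsmul_eq_mul, ← Finset.sum_const]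
        exact Finset.sum_congr rfl fun u hu => by rw [(Finset.mem_filter.1 hu).2]
    _ ≤ ∑ b : ZMod n, k.natAbs * M b := by
        gcongr with b
        exact card_filter_intCast_mul_unit_eq_le n hk b
    _ = k.natAbs * ∑ a : ZMod n, ∑ b : ZMod n, ‖kloostermanSum n a b‖ ^ 4 := by
        rw [← Finset.mul_sum, Finset.sum_comm]
    _ ≤ k.natAbs * ((n : ℝ) ^ 2 * (2 * (n * n.divisors.card) ^ 2)) := by
        gcongr
        exact sum_norm_kloostermanSum_pow_four_le n

end Kloosterman

lemma exists_norm_kloostermanSum_pow_eight_le {k : ℤ} (hk : k ≠ 0) :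
    ∃ C : ℝ, ∀ (n : ℕ) [NeZero n] (h : ZMod n), ‖kloostermanSum n h k‖ ^ 8 ≤ C * (n : ℝ) ^ 7 := by
  obtain ⟨C, hC⟩ := exists_card_divisors_pow_le 6
  refine ⟨4 * k.natAbs ^ 2 * C, fun n _ h => ?_⟩
  have hd : (n.divisors.card : ℝ) ^ 6 ≤ C * n := by exact_mod_cast hC n (NeZero.ne n)
  have hn : (n : ℝ) ≤ n.totient * n.divisors.card := by
    exact_mod_cast le_totient_mul_card_divisors n
  have hX := totient_mul_norm_kloostermanSum_pow_four_le n h hk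
  set d : ℝ := (n.divisors.card : ℝ)
  set X := ‖kloostermanSum n h k‖ ^ 4 with hX_def
  have hXd : X ≤ 2 * k.natAbs * n ^ 3 * d ^ 3 := by
    refine le_of_mul_le_mul_left ?_ (Nat.cast_pos.2 (NeZero.pos n) : (0 : ℝ) < n)
    calc (n : ℝ) * X ≤ n.totient * d * X := by gcongr
      _ = d * (n.totient * X) := by ring
      _ ≤ d * (k.natAbs * ((n : ℝ) ^ 2 * (2 * (n * d) ^ 2))) := by
          gcongr
      _ = n * (2 * k.natAbs * n ^ 3 * d ^ 3) := by ring
  calc ‖kloostermanSum n h k‖ ^ 8 = X ^ 2 := by rw [hX_def]; ring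
    _ ≤ (2 * k.natAbs * n ^ 3 * d ^ 3) ^ 2 := by gcongr
    _ = 4 * k.natAbs ^ 2 * n ^ 6 * d ^ 6 := by ring
    _ ≤ 4 * k.natAbs ^ 2 * n ^ 6 * (C * n) := by gcongr
    _ = 4 * k.natAbs ^ 2 * C * n ^ 7 := by ring

/-! ### Incomplete sums -/

open scoped ZMod

lemma norm_sum_range_add_sub_sum_range_le {E : Type*} [SeminormedAddCommGroup E] {t : ℕ → E}
    (ht : ∀ q, ‖t q‖ ≤ 1) (Q h : ℕ) :
    ‖∑ q ∈ Finset.range Q, t (h + q) - ∑ q ∈ Finset.range Q, t q‖ ≤ 2 * h := by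
  have split : ∑ q ∈ Finset.range h, t q + ∑ q ∈ Finset.range Q, t (h + q) =
      ∑ q ∈ Finset.range Q, t q + ∑ q ∈ Finset.range h, t (Q + q) := by
    rw [← Finset.sum_range_add, ← Finset.sum_range_add, add_comm]
  rw [sub_eq_sub_iff_add_eq_add.2 (by rw [add_comm, split, add_comm] :
    ∑ q ∈ Finset.range Q, t (h + q) + ∑ q ∈ Finset.range h, t q =
      ∑ q ∈ Finset.range h, t (Q + q) + ∑ q ∈ Finset.range Q, t q)]
  have bound (s : ℕ → E) (hs : ∀ q, ‖s q‖ ≤ 1) : ‖∑ q ∈ Finset.range h, s q‖ ≤ h := by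
    simpa using norm_sum_le_of_le (Finset.range h) fun q _ => hs q
  linarith [norm_sub_le (∑ q ∈ Finset.range h, t (Q + q)) (∑ q ∈ Finset.range h, t q),
    bound t ht, bound (fun q => t (Q + q)) fun q => ht _]

/-- Abel summation. -/
lemma norm_sum_range_smul_le {E : Type*} [NormedAddCommGroup E] [NormedSpace ℝ E] {w : ℕ → ℝ}
    {t : ℕ → E} (hw : Antitone w) (hw0 : ∀ q, 0 ≤ w q) {B : ℝ} {Q : ℕ}
    (hB : ∀ m ≤ Q, ‖∑ q ∈ Finset.range m, t q‖ ≤ B) :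
    ‖∑ q ∈ Finset.range Q, w q • t q‖ ≤ w 0 * B := by
  have difference_bound : ‖∑ i ∈ Finset.range (Q - 1), (w (i + 1) - w i) •
      ∑ q ∈ Finset.range (i + 1), t q‖ ≤ (w 0 - w (Q - 1)) * B := by
    rw [← Finset.sum_range_sub', Finset.sum_mul]
    refine norm_sum_le_of_le _ fun i hi => ?_
    rw [norm_smul, Real.norm_eq_abs, abs_sub_comm, abs_of_nonneg (sub_nonneg.2 (hw i.le_succ))]
    exact mul_le_mul_of_nonneg_left
      (hB _ (by have := Finset.mem_range.1 hi; omega)) (sub_nonneg.2 (hw i.le_succ))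
  have boundary_bound : ‖w (Q - 1) • ∑ q ∈ Finset.range Q, t q‖ ≤ w (Q - 1) * B := by
    rw [norm_smul, Real.norm_of_nonneg (hw0 _)]
    exact mul_le_mul_of_nonneg_left (hB Q le_rfl) (hw0 _)
  rw [Finset.sum_range_by_parts]
  linarith [norm_sub_le (w (Q - 1) • ∑ q ∈ Finset.range Q, t q)
    (∑ i ∈ Finset.range (Q - 1), (w (i + 1) - w i) • ∑ q ∈ Finset.range (i + 1), t q)]

section IncompleteSums

variable (n : ℕ) [NeZero n]

lemma sum_norm_sq_sum_mem_stdAddChar (A : Finset (ZMod n)) :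
    ∑ h : ZMod n, ‖∑ a ∈ A, (ZMod.stdAddChar (h * a) : ℂ)‖ ^ 2 = n * A.card := by
  have h := sum_norm_sq_sum_stdAddChar n (fun a : A => (a : ZMod n)) (fun _ => 0)
  have diag : (Finset.univ.filter fun p : A × A => (p.1 : ZMod n) = p.2).card = A.card := by
    rw [show Finset.univ.filter (fun p : A × A => (p.1 : ZMod n) = p.2) = Finset.univ.diag from
      Finset.ext fun p => by simp, Finset.diag_card, Finset.card_univ,
      Fintype.card_coe]
  simp only [mul_zero, add_zero, Finset.sum_const, Finset.card_univ, ZMod.card, nsmul_eq_mul,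
    and_true, diag, ← Finset.mul_sum,
    fun h : ZMod n => Finset.sum_coe_sort A fun a => (ZMod.stdAddChar (h * a) : ℂ)] at h
  have hn : (n : ℝ) ≠ 0 := NeZero.ne _
  exact mul_left_cancel₀ hn (by rw [h]; ring)

variable {n}

lemma norm_sum_sum_add_le {t : ZMod n → ℂ} {M : ℝ} (hM : ∀ h, ‖𝓕 t h‖ ≤ M)
    (A B : Finset (ZMod n)) :
    ‖∑ a ∈ A, ∑ b ∈ B, t (a + b)‖ ≤ M * (√A.card * √B.card) := by
  let S (A : Finset (ZMod n)) (h : ZMod n) : ℂ := ∑ a ∈ A, (ZMod.stdAddChar (h * a) : ℂ)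
  have hM0 : 0 ≤ M := (norm_nonneg _).trans (hM 0)
  have hn : (0 : ℝ) < n := Nat.cast_pos.2 (NeZero.pos n)
  have spectral : ∑ a ∈ A, ∑ b ∈ B, t (a + b) = (n : ℂ)⁻¹ * ∑ h, 𝓕 t h * (S A h * S B h) := by
    have inversion (x : ZMod n) :
        t x = (n : ℂ)⁻¹ * ∑ h, (ZMod.stdAddChar (h * x) : ℂ) * 𝓕 t h := by
      conv_lhs => rw [← ZMod.dft.symm_apply_apply t]
      rw [ZMod.invDFT_apply]
      rfl
    simp_rw [inversion, ← Finset.mul_sum]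
    rw [Finset.sum_congr rfl fun a _ => Finset.sum_comm, Finset.sum_comm]
    congr 1
    refine Finset.sum_congr rfl fun h _ => ?_
    simp only [S, Finset.sum_mul_sum]
    simp only [Finset.sum_mul, mul_add, AddChar.map_add_eq_mul, mul_comm]
  have cauchy_schwarz : ∑ h, ‖S A h‖ * ‖S B h‖ ≤ n * (√A.card * √B.card) := by
    refine (Real.sum_mul_le_sqrt_mul_sqrt _ _ _).trans_eq ?_
    rw [sum_norm_sq_sum_mem_stdAddChar, sum_norm_sq_sum_mem_stdAddChar, Real.sqrt_mul hn.le,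
      Real.sqrt_mul hn.le]
    linear_combination √A.card * √B.card * Real.mul_self_sqrt hn.le
  calc ‖∑ a ∈ A, ∑ b ∈ B, t (a + b)‖
      ≤ (n : ℝ)⁻¹ * ∑ h, ‖𝓕 t h * (S A h * S B h)‖ := by
        rw [spectral, norm_mul, norm_inv, Complex.norm_natCast]
        gcongr
        exact norm_sum_le _ _
    _ ≤ (n : ℝ)⁻¹ * ∑ h, M * (‖S A h‖ * ‖S B h‖) := by
        gcongr with h
        rw [norm_mul, norm_mul]
        gcongr
        exact hM h
    _ ≤ (n : ℝ)⁻¹ * (M * (n * (√A.card * √B.card))) := by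
        rw [← Finset.mul_sum]
        gcongr
    _ = M * (√A.card * √B.card) := by field_simp

/-- The sum over `q < Q` is nearly invariant under shifts by `h < H`; averaging over `h` gives a
bilinear sum. -/
lemma norm_sum_range_le_of_norm_dft_le {t : ZMod n → ℂ} (ht : ∀ x, ‖t x‖ ≤ 1) {M : ℝ}
    (hM : ∀ h, ‖𝓕 t h‖ ≤ M) {H Q : ℕ} (hH : 0 < H) (hHn : H ≤ n) (hQn : Q ≤ n) :
    ‖∑ q ∈ Finset.range Q, t q‖ ≤ 2 * H + M * (√Q / √H) := by
  set S : ℂ := ∑ q ∈ Finset.range Q, t q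
  have natCast_injOn {L : ℕ} (hL : L ≤ n) :
      Set.InjOn (fun q : ℕ => (q : ZMod n)) (Finset.range L : Set ℕ) := fun x hx y hy hxy =>
    Nat.ModEq.eq_of_lt_of_lt ((ZMod.natCast_eq_natCast_iff _ _ _).1 hxy)
      ((Finset.mem_range.1 hx).trans_le hL) ((Finset.mem_range.1 hy).trans_le hL)
  have average : ‖∑ h ∈ Finset.range H, ∑ q ∈ Finset.range Q, t ((h + q : ℕ) : ZMod n)‖ ≤
      M * (√H * √Q) := by
    have := norm_sum_sum_add_le hM ((Finset.range H).image fun q : ℕ => (q : ZMod n))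
      ((Finset.range Q).image fun q : ℕ => (q : ZMod n))
    rwa [Finset.sum_image (natCast_injOn hHn), Finset.card_image_of_injOn (natCast_injOn hHn),
      Finset.card_image_of_injOn (natCast_injOn hQn), Finset.card_range, Finset.card_range,
      Finset.sum_congr rfl fun h _ => Finset.sum_image (natCast_injOn hQn),
      Finset.sum_congr rfl fun h _ => Finset.sum_congr rfl fun q _ => by
        rw [← Nat.cast_add]] at this
  have shift : ‖∑ h ∈ Finset.range H, (∑ q ∈ Finset.range Q, t ((h + q : ℕ) : ZMod n) - S)‖ ≤
      H * (2 * H) := by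
    refine (norm_sum_le_of_le (n := fun _ => 2 * (H : ℝ)) _ fun h hh => ?_).trans_eq (by simp)
    have hhH : (h : ℝ) ≤ H := Nat.cast_le.2 (Finset.mem_range.1 hh).le
    exact (norm_sum_range_add_sub_sum_range_le (t := fun q : ℕ => t q) (fun q => ht q) Q h).trans
      (by gcongr)
  rw [Finset.sum_sub_distrib, Finset.sum_const, Finset.card_range, nsmul_eq_mul] at shift
  have hHS : H * ‖S‖ ≤ M * (√H * √Q) + H * (2 * H) := by
    rw [← Complex.norm_natCast (n := H), ← norm_mul, Complex.norm_natCast]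
    exact (norm_le_norm_add_norm_sub _ _).trans (add_le_add average shift)
  have hH' : (0 : ℝ) < H := Nat.cast_pos.2 hH
  refine le_of_mul_le_mul_left (hHS.trans_eq ?_) hH'
  have : (H : ℝ) / √H = √H := Real.div_sqrt
  calc M * (√H * √Q) + H * (2 * H) = M * (H / √H * √Q) + H * (2 * H) := by rw [this]
    _ = H * (2 * H + M * (√Q / √H)) := by ring

/-- The function `x ↦ e(k x⁻¹ / n)` on the units of `ℤ/n`, extended by zero. -/
noncomputable def inverseChar (n : ℕ) [NeZero n] (k : ℤ) (x : ZMod n) : ℂ :=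
  if IsUnit x then ZMod.stdAddChar ((k : ZMod n) * x⁻¹) else 0

lemma norm_inverseChar_le_one (k : ℤ) (x : ZMod n) : ‖inverseChar n k x‖ ≤ 1 := by
  unfold inverseChar
  split_ifs <;> simp

lemma dft_inverseChar (k : ℤ) (h : ZMod n) :
    𝓕 (inverseChar n k) h = kloostermanSum n (-h) k := by
  rw [ZMod.dft_apply, kloostermanSum]
  refine (Finset.sum_of_injOn (fun u : (ZMod n)ˣ => (u : ZMod n)) Units.val_injective.injOn
    (fun _ _ => Finset.mem_coe.2 (Finset.mem_univ _)) (fun x _ hx => ?_) fun u _ => ?_).symm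
  · rw [inverseChar, if_neg fun hu : IsUnit x => hx ⟨hu.unit, by simp, rfl⟩, smul_zero]
  · rw [inverseChar, if_pos u.isUnit, ZMod.inv_coe_unit, smul_eq_mul, AddChar.map_add_eq_mul,
      neg_mul, mul_comm h]

end IncompleteSums

lemma exists_norm_kloostermanSum_le {k : ℤ} (hk : k ≠ 0) {ε : ℝ} (hε : 0 < ε) :
    ∃ N : ℕ, ∀ (n : ℕ) [NeZero n], N ≤ n → ∀ h : ZMod n, ‖kloostermanSum n h k‖ ≤ ε * n := by
  obtain ⟨C, hC⟩ := exists_norm_kloostermanSum_pow_eight_le hk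
  refine ⟨⌈C / ε ^ 8⌉₊, fun n _ hn h => ?_⟩
  have hCn : C ≤ n * ε ^ 8 := (div_le_iff₀ (by positivity)).1 (Nat.ceil_le.1 hn)
  refine le_of_pow_le_pow_left₀ (n := 8) (by norm_num) (by positivity) ((hC n h).trans ?_)
  calc C * (n : ℝ) ^ 7 ≤ n * ε ^ 8 * (n : ℝ) ^ 7 := by gcongr
    _ = (ε * n) ^ 8 := by ring

lemma exists_norm_sum_range_inverseChar_le {k : ℤ} (hk : k ≠ 0) {ε : ℝ} (hε : 0 < ε) :
    ∃ N : ℕ, ∀ (n : ℕ) [NeZero n], N ≤ n → ∀ Q ≤ n,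
      ‖∑ q ∈ Finset.range Q, inverseChar n k q‖ ≤ ε * n := by
  obtain ⟨δ, hδ, hδε⟩ : ∃ δ : ℝ, 0 < δ ∧ δ ≤ ε / 5 ∧ δ ≤ 1 / 2 :=
    ⟨min (ε / 5) (1 / 2), by positivity, min_le_left _ _, min_le_right _ _⟩
  obtain ⟨N, hN⟩ := exists_norm_kloostermanSum_le hk (show 0 < δ * √δ by positivity)
  refine ⟨max N ⌈1 / δ⌉₊, fun n _ hn Q hQ => ?_⟩
  have hn0 : (0 : ℝ) < n := Nat.cast_pos.2 (NeZero.pos n)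
  have hδn : 1 ≤ n * δ := (div_le_iff₀ hδ).1 (Nat.ceil_le.1 (le_of_max_le_right hn))
  have hM (h : ZMod n) : ‖𝓕 (inverseChar n k) h‖ ≤ δ * √δ * n := by
    rw [dft_inverseChar]
    exact hN n (le_of_max_le_left hn) _
  set H := ⌈δ * n⌉₊
  have hH_ge : δ * n ≤ H := Nat.le_ceil _
  have hH_le : (H : ℝ) ≤ 2 * δ * n := by
    linarith [Nat.ceil_lt_add_one (show 0 ≤ δ * n by positivity)]
  have hHn : H ≤ n := by
    have : 2 * δ * n ≤ 1 * n := by gcongr; linarith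
    exact_mod_cast hH_le.trans (this.trans_eq (one_mul _))
  calc ‖∑ q ∈ Finset.range Q, inverseChar n k q‖
      ≤ 2 * H + δ * √δ * n * (√Q / √H) := norm_sum_range_le_of_norm_dft_le
        (norm_inverseChar_le_one k) hM (Nat.ceil_pos.2 (by positivity)) hHn hQ
    _ ≤ 2 * (2 * δ * n) + δ * √δ * n * (√n / √(δ * n)) := by gcongr
    _ = 5 * δ * n := by
        rw [Real.sqrt_mul hδ.le]
        field_simp
        ring
    _ ≤ ε * n := by gcongr; linarith

/-! ### Equidistribution of modular inverses -/

section Weyl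

variable {T : ℝ} [Fact (0 < T)] {ι : Type*}

lemma integrable_haarAddCircle (F : C(AddCircle T, ℂ)) :
    Integrable F (AddCircle.haarAddCircle : Measure (AddCircle T)) :=
  F.continuous.integrable_of_hasCompactSupport (HasCompactSupport.of_compactSpace _)

/-- The discrepancy of the points `x i`, `i ∈ s`, with weights `w i`, tested against a continuous
function on the circle and compared with the Haar measure of the same total mass. -/
noncomputable def discrepancy (s : Finset ι) (w : ι → ℝ) (x : ι → AddCircle T) :
    C(AddCircle T, ℂ) →ₗ[ℂ] ℂ where
  toFun F := ∑ i ∈ s, (w i : ℂ) * (F (x i) - ∫ y, F y ∂AddCircle.haarAddCircle)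
  map_add' F G := by
    simp_rw [ContinuousMap.add_apply]
    rw [integral_add (integrable_haarAddCircle F) (integrable_haarAddCircle G),
      ← Finset.sum_add_distrib]
    exact Finset.sum_congr rfl fun i _ => by ring
  map_smul' c F := by
    simp_rw [ContinuousMap.smul_apply, integral_smul, smul_eq_mul, RingHom.id_apply,
      Finset.mul_sum]
    exact Finset.sum_congr rfl fun i _ => by ring

lemma discrepancy_apply (s : Finset ι) (w : ι → ℝ) (x : ι → AddCircle T) (F : C(AddCircle T, ℂ)) :
    discrepancy s w x F = ∑ i ∈ s, (w i : ℂ) * (F (x i) - ∫ y, F y ∂AddCircle.haarAddCircle) :=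
  rfl

lemma norm_discrepancy_le (s : Finset ι) {w : ι → ℝ} (hw : ∀ i, 0 ≤ w i) (x : ι → AddCircle T)
    (F : C(AddCircle T, ℂ)) : ‖discrepancy s w x F‖ ≤ (∑ i ∈ s, w i) * (2 * ‖F‖) := by
  have norm_integral_le : ‖∫ y, F y ∂(AddCircle.haarAddCircle : Measure (AddCircle T))‖ ≤ ‖F‖ := by
    simpa using norm_integral_le_of_norm_le_const
      (μ := (AddCircle.haarAddCircle : Measure (AddCircle T))) (ae_of_all _ F.norm_coe_le_norm)
  rw [discrepancy_apply, Finset.sum_mul]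
  refine norm_sum_le_of_le _ fun i _ => ?_
  rw [norm_mul, Complex.norm_of_nonneg (hw i), two_mul]
  gcongr
  · exact hw i
  · exact (norm_sub_le _ _).trans (add_le_add (F.norm_coe_le_norm _) norm_integral_le)

lemma integral_fourier (k : ℤ) :
    ∫ y, fourier k y ∂(AddCircle.haarAddCircle : Measure (AddCircle T)) =
      if k = 0 then 1 else 0 := by
  have h := orthonormal_iff_ite.1 (orthonormal_fourier (T := T)) 0 k
  rw [ContinuousMap.inner_toLp (𝕜 := ℂ)] at h
  simpa only [fourier_zero, map_one, mul_one, eq_comm (a := k)] using h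

/-- Weyl's criterion: the characters span a dense subspace, and the discrepancies are equicontinuous
in `F`. -/
lemma tendsto_discrepancy_of_tendsto_fourier {β : Type*} {l : Filter β} {s : β → Finset ι}
    {w : ι → ℝ} {x : ι → AddCircle T} {C : ℝ} (hw : ∀ i, 0 ≤ w i)
    (hC : ∀ r, ∑ i ∈ s r, w i ≤ C)
    (hx : ∀ k : ℤ, k ≠ 0 → Tendsto (fun r => ∑ i ∈ s r, (w i : ℂ) * fourier k (x i)) l (𝓝 0))
    (F : C(AddCircle T, ℂ)) : Tendsto (fun r => discrepancy (s r) w x F) l (𝓝 0) := by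
  have on_span : ∀ G ∈ Submodule.span ℂ (Set.range (fourier (T := T))),
      Tendsto (fun r => discrepancy (s r) w x G) l (𝓝 0) := by
    intro G hG
    induction hG using Submodule.span_induction with
    | mem G hG =>
      obtain ⟨k, rfl⟩ := hG
      by_cases hk : k = 0
      · simpa [discrepancy_apply, hk] using tendsto_const_nhds
      · simpa only [discrepancy_apply, integral_fourier, if_neg hk, sub_zero] using hx k hk
    | zero => simpa using tendsto_const_nhds
    | add G H _ _ hG hH => simpa using hG.add hH
    | smul c G _ hG => simpa using hG.const_mul c
  have lipschitz (r : β) : LipschitzWith (2 * C).toNNReal (discrepancy (s r) w x) := by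
    refine LipschitzWith.of_dist_le' fun G H => ?_
    rw [dist_eq_norm, dist_eq_norm, ← map_sub]
    calc ‖discrepancy (s r) w x (G - H)‖ ≤ (∑ i ∈ s r, w i) * (2 * ‖G - H‖) :=
          norm_discrepancy_le _ hw _ _
      _ ≤ C * (2 * ‖G - H‖) := by gcongr; exact hC r
      _ = 2 * C * ‖G - H‖ := by ring
  have hF : F ∈ closure (Submodule.span ℂ (Set.range (fourier (T := T))) : Set C(_, ℂ)) := by
    rw [← Submodule.topologicalClosure_coe, span_fourier_closure_eq_top]
    trivial
  have equicontinuous := (LipschitzWith.uniformEquicontinuous _ _ lipschitz).equicontinuous F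
  exact equicontinuous.tendsto_of_mem_closure (f := 0) tendsto_const_nhds on_span hF

end Weyl

/-- The pairs `(n, q)` that can occur as consecutive denominators `(q_m, q_{m-1})` of convergents
with `q_{m-1} ≤ R < q_m` and `a R < q_m < b R`. -/
noncomputable def denominatorPairs (a b R : ℝ) : Finset (ℕ × ℕ) :=
  (Finset.Ioo ⌊a * R⌋₊ ⌈b * R⌉₊ ×ˢ Finset.Icc 1 ⌊R⌋₊).filter fun p => p.2.Coprime p.1

/-- The length of the interval of real numbers having consecutive convergents with given last
numerators and with denominators `(q_m, q_{m-1}) = p`. -/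
noncomputable def cellLength (p : ℕ × ℕ) : ℝ := 1 / (p.1 * (p.1 + p.2))

/-- The inverse of `q` modulo `n`, as a natural number below `n`. -/
noncomputable def invMod (q n : ℕ) : ℕ := ((q : ZMod n)⁻¹).val

lemma cellLength_nonneg (p : ℕ × ℕ) : 0 ≤ cellLength p := by
  unfold cellLength
  positivity

lemma mem_denominatorPairs {a b R : ℝ} (ha : 0 ≤ a) (hR : 0 ≤ R) {p : ℕ × ℕ} :
    p ∈ denominatorPairs a b R ↔
      (a * R < p.1 ∧ p.1 < b * R) ∧ (1 ≤ p.2 ∧ p.2 ≤ R) ∧ p.2.Coprime p.1 := by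
  rw [denominatorPairs, Finset.mem_filter, Finset.mem_product, Finset.mem_Ioo, Finset.mem_Icc,
    Nat.floor_lt (by positivity), Nat.lt_ceil, Nat.le_floor_iff hR, and_assoc]

lemma card_Ioo_floor_ceil_le (x : ℝ) {y : ℝ} (hy : 0 ≤ y) :
    ((Finset.Ioo ⌊x⌋₊ ⌈y⌉₊).card : ℝ) ≤ y := by
  rw [Nat.card_Ioo]
  rcases Nat.eq_zero_or_pos ⌈y⌉₊ with h | h
  · simpa [h] using hy
  · have : ⌈y⌉₊ - ⌊x⌋₊ - 1 < ⌈y⌉₊ := by omega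
    exact (Nat.lt_ceil.1 this).le

lemma sum_denominatorPairs {E : Type*} [AddCommMonoid E] (a b R : ℝ) (f : ℕ × ℕ → E) :
    ∑ p ∈ denominatorPairs a b R, f p = ∑ n ∈ Finset.Ioo ⌊a * R⌋₊ ⌈b * R⌉₊,
      ∑ q ∈ (Finset.Icc 1 ⌊R⌋₊).filter fun q => q.Coprime n, f (n, q) := by
  simp only [denominatorPairs, Finset.sum_filter, Finset.sum_product]

lemma cellLength_le {a b R : ℝ} (ha : 1 ≤ a) (hR : 0 < R) {p : ℕ × ℕ}
    (hp : p ∈ denominatorPairs a b R) : cellLength p ≤ 1 / R ^ 2 := by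
  obtain ⟨⟨hn, -⟩, -⟩ := (mem_denominatorPairs (by linarith) hR.le).1 hp
  have hRn : R ≤ p.1 := (le_mul_of_one_le_left hR.le ha).trans hn.le
  unfold cellLength
  gcongr
  nlinarith [Nat.cast_nonneg (α := ℝ) p.2]

lemma denominatorPairs_eq_empty (a b : ℝ) {R : ℝ} (hR : R < 1) : denominatorPairs a b R = ∅ := by
  simp [denominatorPairs, Nat.floor_eq_zero.2 hR]

lemma sum_cellLength_le {a b : ℝ} (ha : 1 ≤ a) (hb : 0 ≤ b) (R : ℝ) :
    ∑ p ∈ denominatorPairs a b R, cellLength p ≤ b := by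
  rcases lt_or_ge R 1 with hR | hR
  · simpa [denominatorPairs_eq_empty a b hR] using hb
  have hR0 : 0 < R := one_pos.trans_le hR
  have card_le : ((denominatorPairs a b R).card : ℝ) ≤ b * R * R := by
    calc ((denominatorPairs a b R).card : ℝ)
        ≤ (Finset.Ioo ⌊a * R⌋₊ ⌈b * R⌉₊).card * (Finset.Icc 1 ⌊R⌋₊).card := by
          rw [← Nat.cast_mul, ← Finset.card_product]
          exact Nat.cast_le.2 (Finset.card_filter_le _ _)
      _ ≤ b * R * R := by
          gcongr
          · exact card_Ioo_floor_ceil_le _ (by positivity)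
          · simpa using Nat.floor_le hR0.le
  calc ∑ p ∈ denominatorPairs a b R, cellLength p
      ≤ (denominatorPairs a b R).card * (1 / R ^ 2) := by
        rw [← nsmul_eq_mul]
        exact Finset.sum_le_card_nsmul _ _ _ fun p hp => cellLength_le ha hR0 hp
    _ ≤ b * R * R * (1 / R ^ 2) := by gcongr
    _ = b := by field_simp

lemma fourier_invMod (n : ℕ) [NeZero n] (k : ℤ) (q : ℕ) :
    (fourier k ((invMod q n / n : ℝ) : UnitAddCircle) : ℂ) =
      ZMod.stdAddChar ((k : ZMod n) * (q : ZMod n)⁻¹) := by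
  rw [fourier_apply, invMod, ← ZMod.toAddCircle_apply, ← map_zsmul, zsmul_eq_mul]
  rfl

lemma norm_sum_cellLength_mul_fourier_le {n : ℕ} [NeZero n] (hn : n ≠ 1) {k : ℤ} {ε : ℝ}
    (hε : ∀ Q ≤ n, ‖∑ q ∈ Finset.range Q, inverseChar n k q‖ ≤ ε * n) {Q : ℕ} (hQ : Q < n) :
    ‖∑ q ∈ (Finset.Icc 1 Q).filter fun q => q.Coprime n,
      (cellLength (n, q) : ℂ) * fourier k ((invMod q n / n : ℝ) : UnitAddCircle)‖ ≤ ε / n := by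
  have hn0 : (0 : ℝ) < n := Nat.cast_pos.2 (NeZero.pos n)
  let w (q : ℕ) : ℝ := 1 / ((n : ℝ) * (n + q))
  have hw : Antitone w := fun q r hqr => by
    have : (q : ℝ) ≤ r := Nat.cast_le.2 hqr
    simp only [w]
    gcongr
  have rewrite_sum : ∑ q ∈ (Finset.Icc 1 Q).filter fun q => q.Coprime n,
      (cellLength (n, q) : ℂ) * fourier k ((invMod q n / n : ℝ) : UnitAddCircle) =
      ∑ q ∈ Finset.range (Q + 1), w q • inverseChar n k q := by
    have h_zero : inverseChar n k ((0 : ℕ) : ZMod n) = 0 :=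
      if_neg fun h => hn (by simpa using (ZMod.isUnit_iff_coprime 0 n).1 h)
    rw [Finset.sum_filter, Finset.range_eq_Ico, Finset.sum_eq_sum_Ico_succ_bot Q.succ_pos, h_zero,
      smul_zero, zero_add]
    refine Finset.sum_congr rfl fun q _ => ?_
    rw [fourier_invMod, inverseChar]
    simp only [ZMod.isUnit_iff_coprime, smul_ite, smul_zero, Complex.real_smul]
    rfl
  rw [rewrite_sum]
  refine (norm_sum_range_smul_le hw (fun q => by positivity) fun m hm =>
    hε m (hm.trans hQ)).trans_eq ?_
  simp only [w]
  field_simp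
  simp

lemma tendsto_sum_cellLength_mul_fourier {a b : ℝ} (ha : 1 ≤ a) (hb : 0 ≤ b) {k : ℤ}
    (hk : k ≠ 0) :
    Tendsto (fun R => ∑ p ∈ denominatorPairs a b R,
      (cellLength p : ℂ) * fourier k ((invMod p.2 p.1 / p.1 : ℝ) : UnitAddCircle)) atTop (𝓝 0) := by
  rw [Metric.tendsto_atTop]
  intro ε hε
  obtain ⟨N, hN⟩ := exists_norm_sum_range_inverseChar_le hk (show 0 < ε / (b + 1) by positivity)
  refine ⟨max 1 N, fun R hR => ?_⟩
  have hR1 : 1 ≤ R := le_of_max_le_left hR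
  have hR0 : 0 < R := one_pos.trans_le hR1
  rw [dist_zero_right, sum_denominatorPairs]
  calc ‖∑ n ∈ Finset.Ioo ⌊a * R⌋₊ ⌈b * R⌉₊, ∑ q ∈ (Finset.Icc 1 ⌊R⌋₊).filter fun q => q.Coprime n,
        (cellLength (n, q) : ℂ) * fourier k ((invMod q n / n : ℝ) : UnitAddCircle)‖
      ≤ ∑ n ∈ Finset.Ioo ⌊a * R⌋₊ ⌈b * R⌉₊, ε / (b + 1) / R :=
        norm_sum_le_of_le _ fun n hn => by
          have hRn : R < n := (le_mul_of_one_le_left hR0.le ha).trans_lt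
            ((Nat.floor_lt (by positivity)).1 (Finset.mem_Ioo.1 hn).1)
          have hn1 : 1 < n := by exact_mod_cast hR1.trans_lt hRn
          have : NeZero n := ⟨by omega⟩
          have hNn : N ≤ n := by exact_mod_cast (le_of_max_le_right hR).trans hRn.le
          exact (norm_sum_cellLength_mul_fourier_le hn1.ne' (hN n hNn)
            ((Nat.floor_lt hR0.le).2 hRn)).trans (by gcongr)
    _ ≤ b * R * (ε / (b + 1) / R) := by
        rw [Finset.sum_const, nsmul_eq_mul]
        gcongr
        exact card_Ioo_floor_ceil_le _ (by positivity)
    _ = b / (b + 1) * ε := by field_simp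
    _ < ε := mul_lt_of_lt_one_left hε ((div_lt_one (by positivity)).2 (by linarith))

lemma tendsto_discrepancy_invMod {a b : ℝ} (ha : 1 ≤ a) (hb : 0 ≤ b) (F : C(UnitAddCircle, ℂ)) :
    Tendsto (fun R => discrepancy (denominatorPairs a b R) cellLength
      (fun p => ((invMod p.2 p.1 / p.1 : ℝ) : UnitAddCircle)) F) atTop (𝓝 0) :=
  tendsto_discrepancy_of_tendsto_fourier cellLength_nonneg (sum_cellLength_le ha hb)
    (fun _ hk => tendsto_sum_cellLength_mul_fourier ha hb hk) F

/-! ### Sums over primitive lattice points -/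

/-- The upper right corner of the cell of the lattice `ℤ² / R` containing `x`. -/
noncomputable def roundUp (R : ℝ) (x : ℝ × ℝ) : ℝ × ℝ := (⌈R * x.1⌉₊ / R, ⌈R * x.2⌉₊ / R)

/-- The positive lattice points with both coordinates at most `N`. -/
def latticeBox (N : ℕ) : Finset (ℕ × ℕ) := Finset.Icc 1 N ×ˢ Finset.Icc 1 N

lemma mem_latticeBox {N : ℕ} {p : ℕ × ℕ} :
    p ∈ latticeBox N ↔ (1 ≤ p.1 ∧ p.1 ≤ N) ∧ 1 ≤ p.2 ∧ p.2 ≤ N := by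
  simp [latticeBox]

lemma measurable_comp_roundUp (h : ℝ × ℝ → ℝ) (R : ℝ) : Measurable fun x => h (roundUp R x) :=
  (Measurable.of_discrete (f := fun p : ℕ × ℕ => h (p.1 / R, p.2 / R))).comp
    ((measurable_fst.const_mul R).nat_ceil.prodMk (measurable_snd.const_mul R).nat_ceil)

lemma le_roundUp {R : ℝ} (hR : 0 < R) (x : ℝ × ℝ) : x ≤ roundUp R x := by
  constructor
  · exact (le_div_iff₀' hR).2 (Nat.le_ceil _)
  · exact (le_div_iff₀' hR).2 (Nat.le_ceil _)

lemma tendsto_roundUp {x : ℝ × ℝ} (hx : x ∈ Ioi (0 : ℝ) ×ˢ Ioi (0 : ℝ)) :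
    Tendsto (fun R => roundUp R x) atTop (𝓝 x) := by
  have coordinate {y : ℝ} (hy : 0 < y) : Tendsto (fun R : ℝ => (⌈R * y⌉₊ : ℝ) / R) atTop (𝓝 y) := by
    simpa only [mul_comm] using tendsto_nat_ceil_mul_div_atTop hy.le
  exact (coordinate hx.1).prodMk_nhds (coordinate hx.2)

lemma setOf_ceil_mul_eq {R : ℝ} (hR : 0 < R) {n : ℕ} (hn : n ≠ 0) :
    {y : ℝ | ⌈R * y⌉₊ = n} = Ioc ((n - 1) / R) (n / R) := by
  ext y
  rw [mem_ofPred_eq, Nat.ceil_eq_iff hn, Nat.cast_pred (Nat.pos_of_ne_zero hn), mem_Ioc,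
    div_lt_iff₀' hR, le_div_iff₀' hR]

lemma volume_real_prod_setOf_ceil_mul_eq {R : ℝ} (hR : 0 < R) {m n : ℕ} (hm : m ≠ 0)
    (hn : n ≠ 0) :
    (volume : Measure (ℝ × ℝ)).real ({y | ⌈R * y⌉₊ = m} ×ˢ {y | ⌈R * y⌉₊ = n}) = 1 / R ^ 2 := by
  rw [Measure.volume_eq_prod, measureReal_prod_prod, setOf_ceil_mul_eq hR hm,
    setOf_ceil_mul_eq hR hn, Real.volume_real_Ioc_of_le (by gcongr; linarith),
    Real.volume_real_Ioc_of_le (by gcongr; linarith)]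
  field_simp
  ring

lemma setIntegral_comp_roundUp (h : ℝ × ℝ → ℝ) {R : ℝ} (hR : 0 < R) {N : ℕ}
    (hN : ∀ p : ℕ × ℕ, p.1 ≠ 0 → p.2 ≠ 0 → p ∉ latticeBox N → h (p.1 / R, p.2 / R) = 0) :
    ∫ x in Ioi (0 : ℝ) ×ˢ Ioi (0 : ℝ), h (roundUp R x) =
      (∑ p ∈ latticeBox N, h (p.1 / R, p.2 / R)) / R ^ 2 := by
  let Q : Set (ℝ × ℝ) := Ioi 0 ×ˢ Ioi 0
  let cell (p : ℕ × ℕ) : Set (ℝ × ℝ) := {y | ⌈R * y⌉₊ = p.1} ×ˢ {y | ⌈R * y⌉₊ = p.2}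
  have measurableSet_cell (p : ℕ × ℕ) : MeasurableSet (cell p) :=
    ((measurable_const_mul R).nat_ceil (measurableSet_singleton _)).prod
      ((measurable_const_mul R).nat_ceil (measurableSet_singleton _))
  have volume_cell (p : ℕ × ℕ) (hp : p ∈ latticeBox N) :
      (volume.restrict Q).real (cell p) = 1 / R ^ 2 := by
    obtain ⟨⟨hp1, -⟩, hp2, -⟩ := mem_latticeBox.1 hp
    have hcell : cell p ⊆ Q := fun x hx =>
      ⟨pos_of_mul_pos_right (Nat.ceil_pos.1 (hx.1 ▸ hp1)) hR.le,
        pos_of_mul_pos_right (Nat.ceil_pos.1 (hx.2 ▸ hp2)) hR.le⟩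
    rw [measureReal_restrict_apply (measurableSet_cell p), inter_eq_left.2 hcell,
      volume_real_prod_setOf_ceil_mul_eq hR (by omega) (by omega)]
  have sum_cells : EqOn (fun x => h (roundUp R x))
      (fun x => ∑ p ∈ latticeBox N, (cell p).indicator (fun _ => h (p.1 / R, p.2 / R)) x) Q := by
    intro x hx
    have h1 : ⌈R * x.1⌉₊ ≠ 0 := (Nat.ceil_pos.2 (mul_pos hR hx.1)).ne'
    have h2 : ⌈R * x.2⌉₊ ≠ 0 := (Nat.ceil_pos.2 (mul_pos hR hx.2)).ne'
    have mem_cell (p : ℕ × ℕ) : x ∈ cell p ↔ (⌈R * x.1⌉₊, ⌈R * x.2⌉₊) = p := by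
      simp [cell, Prod.ext_iff]
    simp only [indicator_apply, mem_cell, Finset.sum_ite_eq]
    split_ifs with hbox
    · rfl
    · exact hN _ h1 h2 hbox
  rw [setIntegral_congr_fun (measurableSet_Ioi.prod measurableSet_Ioi) sum_cells,
    integral_finsetSum, Finset.sum_div]
  · refine Finset.sum_congr rfl fun p hp => ?_
    rw [integral_indicator_const _ (measurableSet_cell p), volume_cell p hp, smul_eq_mul]
    ring
  · intro p hp
    refine (integrable_indicator_iff (measurableSet_cell p)).2 (integrableOn_const ?_)
    intro htop
    have := volume_cell p hp
    rw [measureReal_def, htop] at this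
    exact absurd this.symm (by positivity)

lemma abs_comp_roundUp_le {h : ℝ × ℝ → ℝ} {C B : ℝ} (hC : ∀ x, |h x| ≤ C)
    (hB : Function.support h ⊆ Iic (B, B)) {R : ℝ} (hR : 0 < R) (x : ℝ × ℝ) :
    |h (roundUp R x)| ≤ (Iic (B, B)).indicator (fun _ => C) x := by
  by_cases hx : h (roundUp R x) = 0
  · rw [hx, abs_zero]
    exact indicator_nonneg (fun _ _ => (abs_nonneg _).trans (hC x)) _
  · rw [indicator_of_mem (mem_Iic.2 ((le_roundUp hR x).trans (hB hx)))]
    exact hC _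

lemma volume_restrict_posQuadrant_Iic_ne_top (B : ℝ) :
    volume.restrict (Ioi (0 : ℝ) ×ˢ Ioi (0 : ℝ)) (Iic (B, B)) ≠ ⊤ := by
  rw [Measure.restrict_apply measurableSet_Iic, ← Iic_prod_Iic, prod_inter_prod, inter_comm,
    Ioi_inter_Iic, Measure.volume_eq_prod, Measure.prod_prod]
  exact ENNReal.mul_ne_top measure_Ioc_lt_top.ne measure_Ioc_lt_top.ne

lemma tendsto_setIntegral_comp_roundUp {h : ℝ × ℝ → ℝ} {C B : ℝ} (hC : ∀ x, |h x| ≤ C)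
    (hB : Function.support h ⊆ Iic (B, B)) (hcont : ∀ᵐ x, ContinuousAt h x) :
    Tendsto (fun R => ∫ x in Ioi (0 : ℝ) ×ˢ Ioi (0 : ℝ), h (roundUp R x)) atTop
      (𝓝 (∫ x in Ioi (0 : ℝ) ×ˢ Ioi (0 : ℝ), h x)) := by
  refine tendsto_integral_filter_of_dominated_convergence ((Iic (B, B)).indicator fun _ => C)
    (Eventually.of_forall fun R => (measurable_comp_roundUp h R).aestronglyMeasurable) ?_ ?_ ?_
  · filter_upwards [eventually_gt_atTop 0] with R hR
    exact ae_of_all _ (abs_comp_roundUp_le hC hB hR)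
  · exact (integrable_indicator_iff measurableSet_Iic).2
      (integrableOn_const (volume_restrict_posQuadrant_Iic_ne_top B))
  · filter_upwards [ae_restrict_of_ae hcont,
      ae_restrict_mem (measurableSet_Ioi.prod measurableSet_Ioi)] with x hx hx0
    exact hx.tendsto.comp (tendsto_roundUp hx0)

lemma abs_setIntegral_comp_roundUp_le {h : ℝ × ℝ → ℝ} {C B : ℝ} (hC : ∀ x, |h x| ≤ C)
    (hB : Function.support h ⊆ Iic (B, B)) {R : ℝ} (hR : 0 < R) :
    |∫ x in Ioi (0 : ℝ) ×ˢ Ioi (0 : ℝ), h (roundUp R x)| ≤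
      ∫ x in Ioi (0 : ℝ) ×ˢ Ioi (0 : ℝ), (Iic (B, B)).indicator (fun _ => C) x := by
  rw [← Real.norm_eq_abs]
  exact norm_integral_le_of_norm_le ((integrable_indicator_iff measurableSet_Iic).2
    (integrableOn_const (volume_restrict_posQuadrant_Iic_ne_top B)))
    (ae_of_all _ (abs_comp_roundUp_le hC hB hR))

lemma sum_Icc_moebius_dvd {n q N : ℕ} (hq : 0 < q) (hN : q ≤ N) :
    ∑ d ∈ Finset.Icc 1 N, (if d ∣ n ∧ d ∣ q then (ArithmeticFunction.moebius d : ℝ) else 0) =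
      if q.Coprime n then 1 else 0 := by
  have divisors : (Finset.Icc 1 N).filter (fun d => d ∣ n ∧ d ∣ q) = (q.gcd n).divisors := by
    ext d
    simp only [Finset.mem_filter, Finset.mem_Icc, Nat.mem_divisors, Nat.dvd_gcd_iff]
    constructor
    · rintro ⟨-, hdn, hdq⟩
      exact ⟨⟨hdq, hdn⟩, (Nat.gcd_pos_of_pos_left _ hq).ne'⟩
    · rintro ⟨⟨hdq, hdn⟩, -⟩
      exact ⟨⟨Nat.pos_of_dvd_of_pos hdq hq, (Nat.le_of_dvd hq hdq).trans hN⟩, hdn, hdq⟩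
  have h := congrArg (fun f : ArithmeticFunction ℤ => f (q.gcd n))
    ArithmeticFunction.moebius_mul_coe_zeta
  simp only [ArithmeticFunction.coe_mul_zeta_apply, ArithmeticFunction.one_apply] at h
  rw [← Finset.sum_filter, divisors]
  exact_mod_cast h

lemma tsum_moebius_div_sq :
    ∑' d : ℕ, (ArithmeticFunction.moebius d : ℝ) / (d : ℝ) ^ 2 = 6 / Real.pi ^ 2 := by
  have h := ArithmeticFunction.LSeries_zeta_mul_Lseries_moebius (s := 2) (by norm_num)
  rw [ArithmeticFunction.LSeries_zeta_eq_riemannZeta (by norm_num), riemannZeta_two] at h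
  have hL : LSeries (fun n => (ArithmeticFunction.moebius n : ℂ)) 2 =
      ((∑' d : ℕ, (ArithmeticFunction.moebius d : ℝ) / (d : ℝ) ^ 2 : ℝ) : ℂ) := by
    rw [LSeries, Complex.ofReal_tsum]
    refine tsum_congr fun n => ?_
    rcases eq_or_ne n 0 with rfl | hn
    · simp
    · rw [LSeries.term_of_ne_zero hn]
      norm_num
  rw [hL] at h
  have h' : Real.pi ^ 2 / 6 * ∑' d : ℕ, (ArithmeticFunction.moebius d : ℝ) / (d : ℝ) ^ 2 = 1 := by
    exact_mod_cast h
  rw [← inv_div]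
  exact eq_inv_of_mul_eq_one_right h'

/-- Möbius inversion. -/
lemma sum_latticeBox_coprime (f : ℕ × ℕ → ℝ) {N : ℕ}
    (hf : ∀ p : ℕ × ℕ, p.1 ≠ 0 → p.2 ≠ 0 → p ∉ latticeBox N → f p = 0) :
    ∑ p ∈ latticeBox N with p.2.Coprime p.1, f p =
      ∑ d ∈ Finset.Icc 1 N, (ArithmeticFunction.moebius d : ℝ) *
        ∑ p ∈ latticeBox N, f (d * p.1, d * p.2) := by
  have dilate (d : ℕ) (hd : 1 ≤ d) : ∑ p ∈ latticeBox N, f (d * p.1, d * p.2) =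
      ∑ p ∈ latticeBox N with d ∣ p.1 ∧ d ∣ p.2, f p := by
    refine Finset.sum_bij_ne_zero (fun p _ _ => (d * p.1, d * p.2)) (fun p hp hp0 => ?_) ?_ ?_
      (fun _ _ _ => rfl)
    · obtain ⟨⟨hp1, -⟩, hp2, -⟩ := mem_latticeBox.1 hp
      refine Finset.mem_filter.2 ⟨?_, dvd_mul_right _ _, dvd_mul_right _ _⟩
      by_contra hbox
      exact hp0 (hf _ (by positivity) (by positivity) hbox)
    · intro p _ _ p' _ _ hpp'
      rw [Prod.mk.injEq, Nat.mul_right_inj (by omega), Nat.mul_right_inj (by omega)] at hpp'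
      exact Prod.ext hpp'.1 hpp'.2
    · rintro ⟨_, _⟩ hp hp0
      obtain ⟨hbox, ⟨m, rfl⟩, k, rfl⟩ := Finset.mem_filter.1 hp
      obtain ⟨⟨hm, hmN⟩, hk, hkN⟩ := mem_latticeBox.1 hbox
      refine ⟨(m, k), mem_latticeBox.2 ⟨⟨?_, ?_⟩, ?_, ?_⟩, hp0, rfl⟩
      · exact Nat.pos_of_mul_pos_left hm
      · exact (Nat.le_mul_of_pos_left m hd).trans hmN
      · exact Nat.pos_of_mul_pos_left hk
      · exact (Nat.le_mul_of_pos_left k hd).trans hkN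
  calc ∑ p ∈ latticeBox N with p.2.Coprime p.1, f p
      = ∑ p ∈ latticeBox N, ∑ d ∈ Finset.Icc 1 N,
          (if d ∣ p.1 ∧ d ∣ p.2 then (ArithmeticFunction.moebius d : ℝ) else 0) * f p := by
        rw [Finset.sum_filter]
        refine Finset.sum_congr rfl fun p hp => ?_
        obtain ⟨-, hp1, hp2⟩ := mem_latticeBox.1 hp
        rw [← Finset.sum_mul, sum_Icc_moebius_dvd hp1 hp2, ite_mul, one_mul, zero_mul]
    _ = ∑ d ∈ Finset.Icc 1 N, (ArithmeticFunction.moebius d : ℝ) *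
          ∑ p ∈ latticeBox N with d ∣ p.1 ∧ d ∣ p.2, f p := by
        rw [Finset.sum_comm]
        refine Finset.sum_congr rfl fun d _ => ?_
        simp only [Finset.sum_filter, Finset.mul_sum, ite_mul, mul_ite, zero_mul, mul_zero]
    _ = _ := Finset.sum_congr rfl fun d hd => by rw [dilate d (Finset.mem_Icc.1 hd).1]

lemma eq_zero_of_notMem_latticeBox {h : ℝ × ℝ → ℝ} {B : ℝ}
    (hB : Function.support h ⊆ Iic (B, B)) {R : ℝ} (hR : 0 < R) {p : ℕ × ℕ} (hp1 : p.1 ≠ 0)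
    (hp2 : p.2 ≠ 0) (hp : p ∉ latticeBox ⌊B * R⌋₊) : h (p.1 / R, p.2 / R) = 0 := by
  by_contra hne
  obtain ⟨h1, h2⟩ := hB hne
  refine hp (mem_latticeBox.2 ⟨⟨by omega, ?_⟩, by omega, ?_⟩)
  · exact Nat.le_floor ((div_le_iff₀ hR).1 h1)
  · exact Nat.le_floor ((div_le_iff₀ hR).1 h2)

lemma sum_coprime_eq_tsum_moebius {h : ℝ × ℝ → ℝ} {B : ℝ} (hB : Function.support h ⊆ Iic (B, B))
    {R : ℝ} (hR : 0 < R) :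
    (∑ p ∈ latticeBox ⌊B * R⌋₊ with p.2.Coprime p.1, h (p.1 / R, p.2 / R)) / R ^ 2 =
      ∑' d : ℕ, (ArithmeticFunction.moebius d : ℝ) / (d : ℝ) ^ 2 *
        ∫ x in Ioi (0 : ℝ) ×ˢ Ioi (0 : ℝ), h (roundUp (R / d) x) := by
  set N := ⌊B * R⌋₊
  have scale (m d : ℕ) : (m : ℝ) / (R / d) = ↑(d * m) / R := by
    rw [div_div_eq_mul_div, mul_comm, Nat.cast_mul]
  have vanishes (d : ℕ) {p : ℕ × ℕ} (hp1 : p.1 ≠ 0) (hp2 : p.2 ≠ 0) (hd : d ≠ 0)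
      (hp : (d * p.1, d * p.2) ∉ latticeBox N) : h (p.1 / (R / d), p.2 / (R / d)) = 0 := by
    rw [scale, scale]
    exact eq_zero_of_notMem_latticeBox hB hR (mul_ne_zero hd hp1) (mul_ne_zero hd hp2) hp
  have integral_eq (d : ℕ) (hd : d ≠ 0) :
      ∫ x in Ioi (0 : ℝ) ×ˢ Ioi (0 : ℝ), h (roundUp (R / d) x) =
        (∑ p ∈ latticeBox N, h (p.1 / (R / d), p.2 / (R / d))) / (R / d) ^ 2 := by
    refine setIntegral_comp_roundUp h (by positivity) fun p hp1 hp2 hp =>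
      vanishes d hp1 hp2 hd fun hbox => hp ?_
    obtain ⟨⟨-, h1⟩, -, h2⟩ := mem_latticeBox.1 hbox
    have hd1 := Nat.pos_of_ne_zero hd
    exact mem_latticeBox.2 ⟨⟨by omega, (Nat.le_mul_of_pos_left _ hd1).trans h1⟩, by omega,
      (Nat.le_mul_of_pos_left _ hd1).trans h2⟩
  rw [tsum_eq_sum (s := Finset.Icc 1 N), sum_latticeBox_coprime (N := N)
    (fun p => h (p.1 / R, p.2 / R)) (fun _ => eq_zero_of_notMem_latticeBox hB hR), Finset.sum_div]
  · refine Finset.sum_congr rfl fun d hd => ?_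
    have hd0 : d ≠ 0 := by have := (Finset.mem_Icc.1 hd).1; omega
    have hd0' : (d : ℝ) ≠ 0 := Nat.cast_ne_zero.2 hd0
    rw [integral_eq d hd0]
    simp only [scale]
    field_simp
  · intro d hd
    rcases eq_or_ne d 0 with rfl | hd0
    · simp
    rw [integral_eq d hd0, Finset.sum_eq_zero, zero_div, mul_zero]
    intro p hp
    obtain ⟨⟨hp1, -⟩, hp2, -⟩ := mem_latticeBox.1 hp
    refine vanishes d (by omega) (by omega) hd0 fun hbox => hd (Finset.mem_Icc.2 ⟨by omega, ?_⟩)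
    exact (Nat.le_mul_of_pos_right d hp1).trans (mem_latticeBox.1 hbox).1.2

lemma tendsto_sum_coprime {h : ℝ × ℝ → ℝ} {C B : ℝ} (hC : ∀ x, |h x| ≤ C)
    (hB : Function.support h ⊆ Iic (B, B)) (hcont : ∀ᵐ x, ContinuousAt h x) :
    Tendsto (fun R : ℝ =>
        (∑ p ∈ latticeBox ⌊B * R⌋₊ with p.2.Coprime p.1, h (p.1 / R, p.2 / R)) / R ^ 2) atTop
      (𝓝 (6 / Real.pi ^ 2 * ∫ x in Ioi (0 : ℝ) ×ˢ Ioi (0 : ℝ), h x)) := by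
  let M := ∫ x in Ioi (0 : ℝ) ×ˢ Ioi (0 : ℝ), (Iic (B, B)).indicator (fun _ => C) x
  rw [← tsum_moebius_div_sq, ← tsum_mul_right]
  refine Tendsto.congr' (f₁ := fun R : ℝ => ∑' d : ℕ,
    (ArithmeticFunction.moebius d : ℝ) / (d : ℝ) ^ 2 *
      ∫ x in Ioi (0 : ℝ) ×ˢ Ioi (0 : ℝ), h (roundUp (R / d) x)) ?_ ?_
  · filter_upwards [eventually_gt_atTop 0] with R hR
    exact (sum_coprime_eq_tsum_moebius hB hR).symm
  refine tendsto_tsum_of_dominated_convergence (bound := fun d : ℕ => 1 / (d : ℝ) ^ 2 * M)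
    ((Real.summable_one_div_nat_pow.2 one_lt_two).mul_right _) (fun d => ?_) ?_
  · rcases Nat.eq_zero_or_pos d with rfl | hd
    · simp
    · exact ((tendsto_setIntegral_comp_roundUp hC hB hcont).comp
        (tendsto_id.atTop_div_const (Nat.cast_pos.2 hd))).const_mul _
  · filter_upwards [eventually_gt_atTop 0] with R hR d
    rcases Nat.eq_zero_or_pos d with rfl | hd
    · simp
    have moebius_le : |(ArithmeticFunction.moebius d : ℝ)| ≤ 1 := by
      exact_mod_cast ArithmeticFunction.abs_moebius_le_one
    rw [norm_mul, norm_div, Real.norm_eq_abs, norm_pow, Real.norm_natCast, Real.norm_eq_abs]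
    gcongr
    exact abs_setIntegral_comp_roundUp_le hC hB (div_pos hR (Nat.cast_pos.2 hd))

lemma ae_continuousAt_indicator {E F : Type*} [NormedAddCommGroup E] [NormedSpace ℝ E]
    [FiniteDimensional ℝ E] [MeasurableSpace E] [BorelSpace E] (μ : Measure E) [μ.IsAddHaarMeasure]
    [TopologicalSpace F] [Zero F] {s : Set E} (hs : Convex ℝ s) {f : E → F}
    (hf : ContinuousOn f s) : ∀ᵐ x ∂μ, ContinuousAt (s.indicator f) x := by
  filter_upwards [measure_eq_zero_iff_ae_notMem.1 (hs.addHaar_frontier μ)] with x hx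
  rw [← mem_compl_iff, compl_frontier_eq_union_interior] at hx
  rcases hx with hx | hx
  · refine (hf.continuousAt (mem_interior_iff_mem_nhds.1 hx)).congr ?_
    filter_upwards [mem_interior_iff_mem_nhds.1 hx] with y hy
    rw [indicator_of_mem hy]
  · refine continuousAt_const.congr (f := fun _ => (0 : F)) ?_
    filter_upwards [mem_interior_iff_mem_nhds.1 hx] with y hy
    rw [indicator_of_notMem hy]

lemma setIntegral_one_div_mul_add {a b : ℝ} (ha : 0 < a) (hab : a ≤ b) :
    ∫ x in Ioo a b ×ˢ Ioc (0 : ℝ) 1, 1 / (x.1 * (x.1 + x.2)) =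
      ∫ s in a..b, Real.log (1 + 1 / s) / s := by
  have continuousOn : ContinuousOn (fun x : ℝ × ℝ => 1 / (x.1 * (x.1 + x.2)))
      (Icc a b ×ˢ Icc (0 : ℝ) 1) := by
    refine continuousOn_const.div (by fun_prop) fun x hx => ?_
    have h1 : 0 < x.1 := ha.trans_le hx.1.1
    have h2 : 0 ≤ x.2 := hx.2.1
    positivity
  have integrableOn := (continuousOn.integrableOn_compact (μ := volume)
    (isCompact_Icc.prod isCompact_Icc)).mono_set
    (prod_mono Ioo_subset_Icc_self Ioc_subset_Icc_self)
  rw [Measure.volume_eq_prod] at integrableOn ⊢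
  rw [setIntegral_prod _ integrableOn, intervalIntegral.integral_of_le hab,
    integral_Ioc_eq_integral_Ioo]
  refine setIntegral_congr_fun measurableSet_Ioo fun s hs => ?_
  have hs0 : 0 < s := ha.trans hs.1
  have log_diff : ∫ y in (0 : ℝ)..1, (s + y)⁻¹ = Real.log (1 + 1 / s) := by
    rw [intervalIntegral.integral_comp_add_left (fun y => y⁻¹), integral_inv_of_pos (by simpa)
      (by positivity), add_zero, add_div, div_self hs0.ne']
  simp only [one_div, mul_inv]
  rw [integral_const_mul, ← intervalIntegral.integral_of_le zero_le_one, log_diff]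
  ring_nf

/-- The function whose values at the points of `ℤ² / R` are, up to the factor `R²`, the cell lengths
of the pairs satisfying the inequalities of `denominatorPairs`. -/
noncomputable def cellProfile (a b : ℝ) : ℝ × ℝ → ℝ :=
  (Ioo a b ×ˢ Ioc 0 1).indicator fun x => 1 / (x.1 * (x.1 + x.2))

lemma prod_Ioo_Ioc_subset {a b : ℝ} (ha : 0 < a) :
    Ioo a b ×ˢ Ioc (0 : ℝ) 1 ⊆ Ioi (0 : ℝ) ×ˢ Ioi (0 : ℝ) :=
  prod_mono (Ioo_subset_Ioi_self.trans (Ioi_subset_Ioi ha.le)) Ioc_subset_Ioi_self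

lemma abs_cellProfile_le {a b : ℝ} (ha : 0 < a) (x : ℝ × ℝ) : |cellProfile a b x| ≤ 1 / a ^ 2 := by
  by_cases hx : x ∈ Ioo a b ×ˢ Ioc (0 : ℝ) 1
  · obtain ⟨h1, h2⟩ := prod_Ioo_Ioc_subset ha hx
    rw [mem_Ioi] at h1 h2
    rw [cellProfile, indicator_of_mem hx, abs_of_pos (by positivity)]
    have := hx.1.1
    gcongr
    nlinarith
  · rw [cellProfile, indicator_of_notMem hx, abs_zero]
    positivity

lemma support_cellProfile_subset (a b : ℝ) :
    Function.support (cellProfile a b) ⊆ Iic (max b 1, max b 1) := fun _ hx =>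
  have hxS := support_indicator_subset hx
  ⟨le_max_of_le_left hxS.1.2.le, le_max_of_le_right hxS.2.2⟩

lemma ae_continuousAt_cellProfile {a : ℝ} (ha : 0 < a) (b : ℝ) :
    ∀ᵐ x, ContinuousAt (cellProfile a b) x :=
  ae_continuousAt_indicator volume ((convex_Ioo a b).prod (convex_Ioc 0 1)) <|
    continuousOn_const.div (by fun_prop) fun x hx => by
      obtain ⟨h1, h2⟩ := prod_Ioo_Ioc_subset ha hx
      rw [mem_Ioi] at h1 h2
      positivity

lemma setIntegral_cellProfile {a b : ℝ} (ha : 0 < a) (hab : a ≤ b) :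
    ∫ x in Ioi (0 : ℝ) ×ˢ Ioi (0 : ℝ), cellProfile a b x =
      ∫ s in a..b, Real.log (1 + 1 / s) / s := by
  unfold cellProfile
  rw [setIntegral_indicator (measurableSet_Ioo.prod measurableSet_Ioc),
    inter_eq_right.2 (prod_Ioo_Ioc_subset ha), setIntegral_one_div_mul_add ha hab]

lemma sum_cellProfile_div_sq {a : ℝ} (ha : 0 < a) (b : ℝ) {R : ℝ} (hR : 0 < R) :
    (∑ p ∈ latticeBox ⌊max b 1 * R⌋₊ with p.2.Coprime p.1,
      cellProfile a b (p.1 / R, p.2 / R)) / R ^ 2 = ∑ p ∈ denominatorPairs a b R, cellLength p := by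
  have mem_iff (p : ℕ × ℕ) : ((p.1 / R, p.2 / R) : ℝ × ℝ) ∈ Ioo a b ×ˢ Ioc (0 : ℝ) 1 ↔
      (a * R < p.1 ∧ p.1 < b * R) ∧ 1 ≤ p.2 ∧ p.2 ≤ R := by
    simp only [mem_prod, mem_Ioo, mem_Ioc, lt_div_iff₀ hR, div_lt_iff₀ hR, div_le_iff₀ hR,
      zero_mul, one_mul, Nat.cast_pos, Nat.one_le_iff_ne_zero, Nat.pos_iff_ne_zero]
  unfold cellProfile
  rw [Finset.sum_div]
  symm
  refine Finset.sum_subset_zero_on_sdiff (fun p hp => ?_) (fun p hp => ?_) fun p hp => ?_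
  · obtain ⟨⟨hn, hnb⟩, ⟨hq, hqR⟩, hpq⟩ := (mem_denominatorPairs ha.le hR.le).1 hp
    have hn0 : 0 < p.1 := Nat.cast_pos.1 ((mul_pos ha hR).trans hn)
    refine Finset.mem_filter.2 ⟨mem_latticeBox.2 ⟨⟨hn0, Nat.le_floor ?_⟩, hq, Nat.le_floor ?_⟩, hpq⟩
    · exact hnb.le.trans (by gcongr; exact le_max_left b 1)
    · exact hqR.trans (le_mul_of_one_le_left hR.le (le_max_right b 1))
  · rw [Finset.mem_sdiff, Finset.mem_filter, mem_denominatorPairs ha.le hR.le] at hp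
    rw [indicator_of_notMem (by rw [mem_iff]; tauto), zero_div]
  · obtain ⟨hn, hq, -⟩ := (mem_denominatorPairs ha.le hR.le).1 hp
    rw [indicator_of_mem ((mem_iff p).2 ⟨hn, hq⟩), cellLength]
    field_simp

lemma tendsto_sum_cellLength {a b : ℝ} (ha : 0 < a) (hab : a ≤ b) :
    Tendsto (fun R => ∑ p ∈ denominatorPairs a b R, cellLength p) atTop
      (𝓝 (6 / Real.pi ^ 2 * ∫ s in a..b, Real.log (1 + 1 / s) / s)) := by
  rw [← setIntegral_cellProfile ha hab]
  refine (tendsto_sum_coprime (abs_cellProfile_le ha) (support_cellProfile_subset a b)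
    (ae_continuousAt_cellProfile ha b)).congr' ?_
  filter_upwards [eventually_gt_atTop 0] with R hR
  exact sum_cellProfile_div_sq ha b hR

/-! ### Consecutive convergents -/

/-- The fractions `p / q < α < p' / n` have determinant one and `α` lies on the same side of their
mediant as `p' / n`. This characterizes consecutive convergents, `p' / n` being the later one, when
the later convergent exceeds `α`; the other case is obtained by replacing `α` with `1 - α`. -/
structure IsConvergentPair (α : ℝ) (n q p' p : ℤ) : Prop where
  det_eq : p' * q - p * n = 1
  lt_upper : n * α < p'
  upper_sub_lt : p' - n * α < q * α - p

namespace IsConvergentPair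

variable {α : ℝ} {n q p' p : ℤ}

lemma pos_sub (h : IsConvergentPair α n q p' p) : 0 < q * α - p :=
  (sub_pos.2 h.lt_upper).trans h.upper_sub_lt

lemma mul_add_mul_eq_one (h : IsConvergentPair α n q p' p) :
    q * (p' - n * α) + n * (q * α - p) = 1 := by
  have det_eq : (p' * q - p * n : ℝ) = 1 := by exact_mod_cast h.det_eq
  linear_combination det_eq

/-- Since the determinant is one, `(s, r)` is an integral combination `x (q, p) + y (n, p')`; as
`0 < s < n`, the coefficients have opposite signs, so the errors add up. -/
lemma sub_le_abs (h : IsConvergentPair α n q p' p) (hq : 0 < q) {s r : ℤ} (hs : 0 < s)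
    (hsn : s < n) : q * α - p ≤ |s * α - r| := by
  obtain ⟨x, y, hx, hy⟩ : ∃ x y : ℤ, s = x * q + y * n ∧ r = x * p + y * p' := by
    refine ⟨s * p' - r * n, r * q - s * p, ?_, ?_⟩
    · linear_combination (-s) * h.det_eq
    · linear_combination (-r) * h.det_eq
  have combination : s * α - r = x * (q * α - p) - y * (p' - n * α) := by
    rw [hx, hy]
    push_cast
    ring
  have hD := h.pos_sub
  have hE := sub_pos.2 h.lt_upper
  rw [combination, le_abs]
  rcases le_or_gt y 0 with hy0 | hy0
  · have hx1 : 1 ≤ x := by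
      by_contra! hx0
      nlinarith
    have hx1' : (1 : ℝ) ≤ x := by exact_mod_cast hx1
    have hy0' : (y : ℝ) ≤ 0 := by exact_mod_cast hy0
    left
    nlinarith
  · have hx1 : x ≤ -1 := by
      by_contra! hx0
      nlinarith
    have hx1' : (x : ℝ) ≤ -1 := by exact_mod_cast hx1
    have hy0' : (0 : ℝ) < y := by exact_mod_cast hy0
    right
    nlinarith

end IsConvergentPair

lemma eq_zero_of_irrational_mul_eq {α : ℝ} (hα : Irrational α) {s r : ℤ} (h : s * α = r) :
    s = 0 := by
  by_contra hs
  exact (hα.intCast_mul hs).ne_int r h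

lemma eq_of_abs_sub_eq_abs_sub {α : ℝ} (hα : Irrational α) {q q' p p' : ℤ} (hq : 0 < q)
    (hq' : 0 < q') (h : |q * α - p| = |q' * α - p'|) : q = q' ∧ p = p' := by
  rcases abs_eq_abs.1 h with h | h
  · have hqq : q - q' = 0 := eq_zero_of_irrational_mul_eq hα (r := p - p') (by
      push_cast
      linear_combination h)
    obtain rfl : q = q' := by omega
    have hpp : (p : ℝ) = p' := by linear_combination -h
    exact ⟨rfl, by exact_mod_cast hpp⟩
  · have := eq_zero_of_irrational_mul_eq hα (s := q + q') (r := p + p') (by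
      push_cast
      linear_combination h)
    omega

namespace IsConvergentPair

variable {α : ℝ} {n q p' p n₂ q₂ p₂' p₂ : ℤ}

lemma eq_of_irrational (h : IsConvergentPair α n q p' p) (h₂ : IsConvergentPair α n₂ q₂ p₂' p₂)
    (hα : Irrational α) (hq : 0 < q) (hq₂ : 0 < q₂) (hqn₂ : q < n₂) (hq₂n : q₂ < n) :
    n = n₂ ∧ q = q₂ := by
  have errors_eq : |q * α - p| = |q₂ * α - p₂| := by
    rw [abs_of_pos h.pos_sub, abs_of_pos h₂.pos_sub]
    refine le_antisymm ?_ ?_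
    · rw [← abs_of_pos h₂.pos_sub]
      exact h.sub_le_abs hq hq₂ hq₂n
    · rw [← abs_of_pos h.pos_sub]
      exact h₂.sub_le_abs hq₂ hq hqn₂
  obtain ⟨rfl, rfl⟩ := eq_of_abs_sub_eq_abs_sub hα hq hq₂ errors_eq
  refine ⟨?_, rfl⟩
  have hD := h.pos_sub
  have hq' : (0 : ℝ) < q := by exact_mod_cast hq
  have lt_add {m m₂ r r₂ : ℤ} (h : IsConvergentPair α m q r p)
      (h₂ : IsConvergentPair α m₂ q r₂ p) : m₂ < m + q := by
    have : (m₂ : ℝ) < m + q := by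
      nlinarith [h.mul_add_mul_eq_one, h₂.mul_add_mul_eq_one, h.upper_sub_lt, h₂.lt_upper]
    exact_mod_cast this
  have isCoprime : IsCoprime q p := ⟨p', -n, by linear_combination h.det_eq⟩
  have dvd : q ∣ n - n₂ := isCoprime.dvd_of_dvd_mul_left
    ⟨p' - p₂', by linear_combination h₂.det_eq - h.det_eq⟩
  have := Int.eq_zero_of_abs_lt_dvd dvd (abs_lt.2 ⟨by linarith [lt_add h h₂],
    by linarith [lt_add h₂ h]⟩)
  omega

lemma false_of_one_sub (h : IsConvergentPair α n q p' p)
    (h₂ : IsConvergentPair (1 - α) n₂ q₂ p₂' p₂) (hα : Irrational α) (hq : 0 < q) (hq₂ : 0 < q₂)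
    (hqn₂ : q < n₂) (hq₂n : q₂ < n) : False := by
  have hD := h.pos_sub
  have hD₂ := h₂.pos_sub
  have reflect : (q₂ * α - ↑(q₂ - p₂) : ℝ) = -(q₂ * (1 - α) - p₂) := by
    push_cast
    ring
  have errors_eq : |q * α - p| = |q₂ * α - ↑(q₂ - p₂)| := by
    refine le_antisymm ?_ ?_
    · rw [abs_of_pos hD]
      exact h.sub_le_abs hq hq₂ hq₂n
    · rw [reflect, abs_neg, abs_of_pos hD₂]
      refine (h₂.sub_le_abs hq₂ hq hqn₂ (r := q - p)).trans_eq ?_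
      rw [← abs_neg]
      push_cast
      ring_nf
  obtain ⟨rfl, rfl⟩ := eq_of_abs_sub_eq_abs_sub hα hq hq₂ errors_eq
  linarith

end IsConvergentPair

/-- The real numbers `α` in the unit interval having consecutive convergents with denominators
`(q_m, q_{m-1}) = p` and with `q_m α` less than the numerator of the `m`-th convergent. -/
def cell (p : ℕ × ℕ) : Set ℝ :=
  Ioo (invMod p.2 p.1 / p.1 - cellLength p) (invMod p.2 p.1 / p.1)

lemma invMod_lt {n : ℕ} (q : ℕ) (hn : n ≠ 0) : invMod q n < n := by
  have : NeZero n := ⟨hn⟩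
  exact ZMod.val_lt _

lemma invMod_div_mem_Ico {n : ℕ} (q : ℕ) (hn : n ≠ 0) : (invMod q n / n : ℝ) ∈ Ico 0 1 := by
  refine ⟨by positivity, (div_lt_one (by positivity)).2 ?_⟩
  exact_mod_cast invMod_lt q hn

lemma intCast_eq_inv_of_det_eq {n q : ℕ} {p' p : ℤ} (h : p' * q - p * n = 1) :
    (p' : ZMod n) = (q : ZMod n)⁻¹ := by
  have mul_eq_one : (p' : ZMod n) * q = 1 := by
    have := congrArg (Int.cast : ℤ → ZMod n) h
    simpa using this
  have unit : (q : ZMod n) * (q : ZMod n)⁻¹ = 1 := ZMod.coe_mul_inv_eq_one q <| by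
    rw [← Nat.isCoprime_iff_coprime]
    exact ⟨p', -p, by linear_combination h⟩
  calc (p' : ZMod n) = p' * (q * (q : ZMod n)⁻¹) := by rw [unit, mul_one]
    _ = _ := by rw [← mul_assoc, mul_eq_one, one_mul]

lemma exists_invMod_mul_sub_eq_one {n q : ℕ} (hn : n ≠ 0) (hqn : q.Coprime n) :
    ∃ p : ℤ, (invMod q n : ℤ) * q - p * n = 1 := by
  have : NeZero n := ⟨hn⟩
  have mul_eq_one : ((invMod q n * q : ℤ) : ZMod n) = (1 : ℤ) := by
    push_cast
    rw [invMod, ZMod.natCast_val, ZMod.cast_id, mul_comm, ZMod.coe_mul_inv_eq_one q hqn]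
  obtain ⟨p, hp⟩ := (ZMod.intCast_eq_intCast_iff_dvd_sub _ _ _).1 mul_eq_one
  exact ⟨-p, by linear_combination -hp⟩

lemma invMod_pos {n q : ℕ} (hn : 1 < n) (hqn : q.Coprime n) : 0 < invMod q n := by
  have : Fact (1 < n) := ⟨hn⟩
  refine Nat.pos_of_ne_zero fun h => ?_
  have unit := ZMod.coe_mul_inv_eq_one q hqn
  rw [(ZMod.val_eq_zero _).1 h, mul_zero] at unit
  exact zero_ne_one unit

lemma eq_invMod_of_det_eq {n q : ℕ} {p' p : ℤ} (hn : 1 < n) (h0 : 0 < p') (hp' : p' ≤ n)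
    (h : p' * q - p * n = 1) : p' = invMod q n := by
  have : NeZero n := ⟨by omega⟩
  have hne : p' ≠ n := by
    rintro rfl
    have : (n : ℤ) ∣ 1 := ⟨q - p, by linear_combination -h⟩
    have := Int.le_of_dvd one_pos this
    omega
  rw [invMod, ← intCast_eq_inv_of_det_eq h, ZMod.val_intCast, Int.emod_eq_of_lt h0.le (by omega)]

/-- By `IsConvergentPair.mul_add_mul_eq_one`, the last condition defining a convergent pair says
that `p' - n α < 1 / (n + q)`. -/
lemma isConvergentPair_iff_mem_Ioo {n q : ℕ} (hn : n ≠ 0) {p' p : ℤ} (h : p' * q - p * n = 1)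
    {α : ℝ} : IsConvergentPair α n q p' p ↔ α ∈ Ioo (p' / n - cellLength (n, q)) (p' / n : ℝ) := by
  have hn0 : (0 : ℝ) < n := by positivity
  have h' : (p' * q - p * n : ℝ) = 1 := by exact_mod_cast h
  have last_condition : p' - n * α < q * α - p ↔ (p' - n * α) * (n + q) < 1 := by
    have : n * (q * α - p) = 1 - q * (p' - n * α) := by linear_combination h'
    rw [← mul_lt_mul_iff_right₀ hn0, this]
    constructor <;> intro _ <;> linarith
  have lower : p' / n - cellLength (n, q) < α ↔ (p' - n * α) * (n + q) < 1 := by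
    have : p' / n - cellLength (n, q) = (p' - 1 / (n + q)) / n := by
      rw [cellLength]
      field_simp
    rw [this, div_lt_iff₀' hn0, sub_lt_comm, lt_div_iff₀ (by positivity)]
  rw [mem_Ioo, lower, lt_div_iff₀' hn0, ← last_condition]
  exact ⟨fun H => ⟨H.upper_sub_lt, H.lt_upper⟩, fun H => ⟨h, H.2, H.1⟩⟩

lemma IsConvergentPair.coprime {α : ℝ} {n q : ℕ} {p' p : ℤ} (h : IsConvergentPair α n q p' p) :
    q.Coprime n :=
  Nat.isCoprime_iff_coprime.1 ⟨p', -p, by linear_combination h.det_eq⟩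

lemma cellLength_le_one_div {n : ℕ} (hn : n ≠ 0) (q : ℕ) : cellLength (n, q) ≤ 1 / n := by
  have hn1 : (1 : ℝ) ≤ n := by exact_mod_cast Nat.one_le_iff_ne_zero.2 hn
  rw [cellLength]
  gcongr
  nlinarith [Nat.cast_nonneg (α := ℝ) q]

lemma IsConvergentPair.mem_cell {α : ℝ} {n q : ℕ} {p' p : ℤ} (h : IsConvergentPair α n q p' p)
    (hn : 1 < n) (hα : α ∈ Ioo (0 : ℝ) 1) : α ∈ cell (n, q) := by
  have hn0 : (0 : ℝ) < n := Nat.cast_pos.2 (by omega)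
  have hmem := (isConvergentPair_iff_mem_Ioo (by omega) h.det_eq).1 h
  have p'_pos : (0 : ℝ) < p' := by simpa [hn0] using hα.1.trans hmem.2
  have p'_lt : (p' : ℝ) < n + 1 := by
    have : (p' : ℝ) / n < 1 + 1 / n := by
      linarith [hmem.1, hα.2, cellLength_le_one_div (n := n) (by omega) q]
    rwa [div_lt_iff₀ hn0, add_mul, one_mul, one_div_mul_cancel hn0.ne'] at this
  have p'_lt' : p' < n + 1 := by exact_mod_cast p'_lt
  have p'_eq := eq_invMod_of_det_eq hn (by exact_mod_cast p'_pos) (by omega) h.det_eq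
  have p'_cast : (p' : ℝ) = invMod q n := by exact_mod_cast p'_eq
  rwa [cell, ← p'_cast]

lemma exists_isConvergentPair_of_mem_cell {α : ℝ} {n q : ℕ} (hn : n ≠ 0) (hqn : q.Coprime n)
    (h : α ∈ cell (n, q)) : ∃ p' p, IsConvergentPair α n q p' p := by
  obtain ⟨p, hp⟩ := exists_invMod_mul_sub_eq_one hn hqn
  exact ⟨invMod q n, p, (isConvergentPair_iff_mem_Ioo hn hp).2 (by simpa [cell] using h)⟩

lemma cell_subset {n q : ℕ} (hn : 1 < n) (hqn : q.Coprime n) : cell (n, q) ⊆ Ioo 0 1 := by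
  have one_div_le : 1 / (n : ℝ) ≤ invMod q n / n := by
    gcongr
    exact_mod_cast invMod_pos hn hqn
  exact Ioo_subset_Ioo (sub_nonneg.2 ((cellLength_le_one_div (by omega) q).trans one_div_le))
    (invMod_div_mem_Ico q (by omega)).2.le

/-! ### Denominators of the convergents around a threshold -/

lemma iterate_gaussMap_mem {α : ℝ} (h0 : α ∈ Ioo (0 : ℝ) 1) (hα : Irrational α) (m : ℕ) :
    gaussMap^[m] α ∈ Ioo (0 : ℝ) 1 ∧ Irrational (gaussMap^[m] α) := by
  induction m with
  | zero => exact ⟨h0, hα⟩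
  | succ m ih =>
    rw [Function.iterate_succ_apply']
    have irrational : Irrational (gaussMap (gaussMap^[m] α)) := by
      rw [gaussMap, one_div, Int.fract]
      exact (irrational_inv_iff.2 ih.2).sub_intCast _
    exact ⟨⟨(Int.fract_nonneg _).lt_of_ne' irrational.ne_zero, Int.fract_lt_one _⟩, irrational⟩

lemma one_div_iterate_gaussMap {α : ℝ} (h0 : α ∈ Ioo (0 : ℝ) 1) (hα : Irrational α) (m : ℕ) :
    1 / gaussMap^[m] α = pq α (m + 1) + gaussMap^[m + 1] α := by
  obtain ⟨hx, -⟩ := iterate_gaussMap_mem h0 hα m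
  rw [Function.iterate_succ_apply', pq, Nat.add_sub_cancel, gaussMap,
    natCast_floor_eq_intCast_floor (one_div_pos.2 hx.1).le]
  exact (Int.floor_add_fract _).symm

lemma one_le_pq {α : ℝ} (h0 : α ∈ Ioo (0 : ℝ) 1) (hα : Irrational α) (m : ℕ) :
    1 ≤ pq α (m + 1) := by
  obtain ⟨hx, -⟩ := iterate_gaussMap_mem h0 hα m
  rw [pq, Nat.add_sub_cancel, Nat.one_le_floor_iff]
  exact (one_le_one_div hx.1 hx.2.le)

/-- The approximation errors are alternating, hence the sign. -/
lemma neg_one_pow_mul_error_succ {α : ℝ} (h0 : α ∈ Ioo (0 : ℝ) 1) (hα : Irrational α) (m : ℕ) :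
    (-1) ^ (m + 1) * (qden (pq α) (m + 1) * α - pnum (pq α) (m + 1) : ℝ) =
      gaussMap^[m + 1] α * ((-1) ^ m * (qden (pq α) m * α - pnum (pq α) m)) := by
  have one_eq (m : ℕ) : 1 = (pq α (m + 1) + gaussMap^[m + 1] α) * gaussMap^[m] α := by
    rw [← one_div_iterate_gaussMap h0 hα, one_div_mul_cancel]
    exact (iterate_gaussMap_mem h0 hα m).1.1.ne'
  induction m with
  | zero =>
    have := one_eq 0
    rw [Function.iterate_zero, id] at this
    simp only [qden, pnum, zero_add, pow_one, pow_zero, Nat.cast_one, Nat.cast_zero] at this ⊢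
    linear_combination this
  | succ m ih =>
    have step : (-1 : ℝ) ^ (m + 2) * (qden (pq α) (m + 2) * α - pnum (pq α) (m + 2)) =
        (-1) ^ m * (pq α (m + 2) * (qden (pq α) (m + 1) * α - pnum (pq α) (m + 1)) +
          (qden (pq α) m * α - pnum (pq α) m)) := by
      simp only [qden, pnum, Nat.cast_add, Nat.cast_mul]
      ring
    rw [step]
    linear_combination (-1) ^ m * (qden (pq α) m * α - pnum (pq α) m) * one_eq (m + 1) -
      (pq α (m + 2) + gaussMap^[m + 2] α) * ih

lemma neg_one_pow_mul_error_pos {α : ℝ} (h0 : α ∈ Ioo (0 : ℝ) 1) (hα : Irrational α) (m : ℕ) :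
    0 < (-1) ^ m * (qden (pq α) m * α - pnum (pq α) m : ℝ) := by
  induction m with
  | zero => simpa [qden, pnum] using h0.1
  | succ m ih =>
    rw [neg_one_pow_mul_error_succ h0 hα]
    exact mul_pos (iterate_gaussMap_mem h0 hα (m + 1)).1.1 ih

lemma pnum_mul_qden_sub (b : ℕ → ℕ) (m : ℕ) :
    (pnum b (m + 1) : ℤ) * qden b m - pnum b m * qden b (m + 1) = (-1) ^ m := by
  induction m with
  | zero => simp [pnum, qden]
  | succ m ih =>
    simp only [pnum, qden, Nat.cast_add, Nat.cast_mul]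
    rw [pow_succ]
    linear_combination -ih

lemma exists_isConvergentPair_qden {α : ℝ} (h0 : α ∈ Ioo (0 : ℝ) 1) (hα : Irrational α) (m : ℕ) :
    ∃ p' p, IsConvergentPair α (qden (pq α) (m + 1)) (qden (pq α) m) p' p ∨
      IsConvergentPair (1 - α) (qden (pq α) (m + 1)) (qden (pq α) m) p' p := by
  have hpos := neg_one_pow_mul_error_pos h0 hα m
  have hpos' := neg_one_pow_mul_error_pos h0 hα (m + 1)
  have hlt : (-1) ^ (m + 1) * (qden (pq α) (m + 1) * α - pnum (pq α) (m + 1) : ℝ) <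
      (-1) ^ m * (qden (pq α) m * α - pnum (pq α) m) := by
    rw [neg_one_pow_mul_error_succ h0 hα]
    exact mul_lt_of_lt_one_left hpos (iterate_gaussMap_mem h0 hα (m + 1)).1.2
  have det := pnum_mul_qden_sub (pq α) m
  rw [pow_succ] at hpos' hlt
  rcases neg_one_pow_eq_or ℝ m with hm | hm
  · have hm' : (-1 : ℤ) ^ m = 1 := by exact_mod_cast hm
    rw [hm] at hpos hpos' hlt
    refine ⟨pnum (pq α) (m + 1), pnum (pq α) m, .inl ⟨det.trans hm', ?_, ?_⟩⟩
    · push_cast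
      linarith
    · push_cast
      linarith
  · have hm' : (-1 : ℤ) ^ m = -1 := by exact_mod_cast hm
    rw [hm] at hpos hpos' hlt
    refine ⟨qden (pq α) (m + 1) - pnum (pq α) (m + 1), qden (pq α) m - pnum (pq α) m,
      .inr ⟨?_, ?_, ?_⟩⟩
    · linear_combination -det - hm'
    · push_cast
      linarith
    · push_cast
      linarith

lemma one_le_qden {α : ℝ} (h0 : α ∈ Ioo (0 : ℝ) 1) (hα : Irrational α) :
    ∀ m, 1 ≤ qden (pq α) m
  | 0 => le_rfl
  | 1 => one_le_pq h0 hα 0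
  | m + 2 => (one_le_qden h0 hα m).trans (Nat.le_add_left _ _)

lemma le_qden {α : ℝ} (h0 : α ∈ Ioo (0 : ℝ) 1) (hα : Irrational α) :
    ∀ m, m ≤ qden (pq α) m
  | 0 => Nat.zero_le _
  | 1 => one_le_pq h0 hα 0
  | m + 2 => show m + 1 + 1 ≤ _ from add_le_add
      ((le_qden h0 hα (m + 1)).trans (Nat.le_mul_of_pos_left _ (one_le_pq h0 hα (m + 1))))
      (one_le_qden h0 hα m)

lemma exists_nIndex_eq_succ {α : ℝ} (h0 : α ∈ Ioo (0 : ℝ) 1) (hα : Irrational α) {R : ℝ}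
    (hR : 1 ≤ R) :
    ∃ m, nIndex α R = m + 1 ∧ qden (pq α) m ≤ R ∧ R < qden (pq α) (m + 1) := by
  have nonempty : {m : ℕ | R < qden (pq α) m}.Nonempty := by
    refine ⟨⌊R⌋₊ + 1, (Nat.lt_floor_add_one R).trans_le ?_⟩
    exact_mod_cast le_qden h0 hα (⌊R⌋₊ + 1)
  have lt_qden : R < qden (pq α) (nIndex α R) := Nat.sInf_mem nonempty
  obtain ⟨m, hm⟩ : ∃ m, nIndex α R = m + 1 := by
    refine Nat.exists_eq_succ_of_ne_zero fun h => ?_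
    rw [h, qden, Nat.cast_one] at lt_qden
    exact hR.not_gt lt_qden
  rw [hm] at lt_qden
  have not_mem := Nat.notMem_of_lt_sInf (hm ▸ Nat.lt_succ_self m : m < nIndex α R)
  exact ⟨m, hm, not_lt.1 not_mem, lt_qden⟩

lemma ae_irrational : ∀ᵐ α : ℝ, Irrational α :=
  (countable_range ((↑) : ℚ → ℝ)).ae_notMem volume

/-! ### The set of numbers with given denominators as a union of cells -/

/-- The numbers `α` such that the first convergent with denominator greater than `R` has its
denominator in `(a R, b R)`. -/
def convergentSet (a b R : ℝ) : Set ℝ :=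
  {α | α ∈ Ioo (0 : ℝ) 1 ∧ Irrational α ∧ a < (qden (pq α) (nIndex α R) : ℝ) / R ∧
    (qden (pq α) (nIndex α R) : ℝ) / R < b}

/-- The numbers having consecutive convergents with denominators `(q_m, q_{m-1}) = p`, on either
side. -/
def symmCell (p : ℕ × ℕ) : Set ℝ := cell p ∪ (1 - ·) ⁻¹' cell p

lemma isOpen_preimage_one_sub_cell (p : ℕ × ℕ) : IsOpen ((1 - ·) ⁻¹' cell p : Set ℝ) :=
  isOpen_Ioo.preimage (by fun_prop)

lemma isOpen_symmCell (p : ℕ × ℕ) : IsOpen (symmCell p) :=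
  isOpen_Ioo.union (isOpen_preimage_one_sub_cell p)

lemma one_sub_mem_symmCell {p : ℕ × ℕ} {α : ℝ} (h : α ∈ symmCell p) : 1 - α ∈ symmCell p :=
  h.elim (fun h => .inr (by rwa [mem_preimage, sub_sub_cancel])) .inl

lemma disjoint_of_isOpen_of_irrational {U V : Set ℝ} (hU : IsOpen U) (hV : IsOpen V)
    (h : ∀ α, Irrational α → α ∈ U → α ∉ V) : Disjoint U V := by
  by_contra hUV
  obtain ⟨α, ⟨hαU, hαV⟩, hα⟩ := dense_irrational.inter_open_nonempty _ (hU.inter hV)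
    (not_disjoint_iff_nonempty_inter.1 hUV)
  exact h α hα hαU hαV

section DenominatorPairs

variable {a b R : ℝ} {p p₂ : ℕ × ℕ} {α : ℝ}

lemma bounds_of_mem_denominatorPairs (ha : 1 ≤ a) (hR : 0 < R) (hp : p ∈ denominatorPairs a b R)
    (hp₂ : p₂ ∈ denominatorPairs a b R) : 0 < p.2 ∧ p₂.2 < p.1 ∧ p.2.Coprime p.1 := by
  rw [mem_denominatorPairs (by linarith) hR.le] at hp hp₂
  have : (p₂.2 : ℝ) < p.1 :=
    hp₂.2.1.2.trans_lt ((le_mul_of_one_le_left hR.le ha).trans_lt hp.1.1)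
  exact ⟨hp.2.1.1, by exact_mod_cast this, hp.2.2⟩

lemma exists_mem_symmCell (h0 : α ∈ Ioo (0 : ℝ) 1) (hα : Irrational α) (hR : 1 ≤ R) :
    ∃ q : ℕ, (1 ≤ q ∧ q ≤ R) ∧ R < qden (pq α) (nIndex α R) ∧
      q.Coprime (qden (pq α) (nIndex α R)) ∧ α ∈ symmCell (qden (pq α) (nIndex α R), q) := by
  obtain ⟨m, hm, hq, hn⟩ := exists_nIndex_eq_succ h0 hα hR
  have hn1 : 1 < qden (pq α) (m + 1) := by exact_mod_cast hR.trans_lt hn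
  rw [hm]
  refine ⟨qden (pq α) m, ⟨one_le_qden h0 hα m, hq⟩, hn, ?_⟩
  obtain ⟨p', p, h | h⟩ := exists_isConvergentPair_qden h0 hα m
  · exact ⟨h.coprime, .inl (h.mem_cell hn1 h0)⟩
  · exact ⟨h.coprime, .inr (h.mem_cell hn1 ⟨sub_pos.2 h0.2, sub_lt_self 1 h0.1⟩)⟩

lemma eq_of_mem_cell (ha : 1 ≤ a) (hR : 0 < R) (hα : Irrational α)
    (hp : p ∈ denominatorPairs a b R) (hp₂ : p₂ ∈ denominatorPairs a b R) (h : α ∈ cell p)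
    (h₂ : α ∈ cell p₂) : p = p₂ := by
  obtain ⟨hq, hq₂n, hcop⟩ := bounds_of_mem_denominatorPairs ha hR hp hp₂
  obtain ⟨hq₂, hqn₂, hcop₂⟩ := bounds_of_mem_denominatorPairs ha hR hp₂ hp
  obtain ⟨_, _, h⟩ := exists_isConvergentPair_of_mem_cell (by omega) hcop h
  obtain ⟨_, _, h₂⟩ := exists_isConvergentPair_of_mem_cell (by omega) hcop₂ h₂
  exact Prod.ext_iff.2 <| by
    exact_mod_cast h.eq_of_irrational h₂ hα (by omega) (by omega) (by omega) (by omega)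

lemma one_sub_notMem_cell (ha : 1 ≤ a) (hR : 0 < R) (hα : Irrational α)
    (hp : p ∈ denominatorPairs a b R) (hp₂ : p₂ ∈ denominatorPairs a b R) (h : α ∈ cell p) :
    1 - α ∉ cell p₂ := fun h₂ => by
  obtain ⟨hq, hq₂n, hcop⟩ := bounds_of_mem_denominatorPairs ha hR hp hp₂
  obtain ⟨hq₂, hqn₂, hcop₂⟩ := bounds_of_mem_denominatorPairs ha hR hp₂ hp
  obtain ⟨_, _, h⟩ := exists_isConvergentPair_of_mem_cell (by omega) hcop h
  obtain ⟨_, _, h₂⟩ := exists_isConvergentPair_of_mem_cell (by omega) hcop₂ h₂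
  exact h.false_of_one_sub h₂ hα (by omega) (by omega) (by omega) (by omega)

lemma eq_of_mem_symmCell (ha : 1 ≤ a) (hR : 0 < R) (hα : Irrational α)
    (hp : p ∈ denominatorPairs a b R) (hp₂ : p₂ ∈ denominatorPairs a b R) (h : α ∈ symmCell p)
    (h₂ : α ∈ symmCell p₂) : p = p₂ := by
  wlog hcell : α ∈ cell p generalizing α
  · have hα' : Irrational (1 - α) := by simpa using hα.intCast_sub 1
    exact this hα' (one_sub_mem_symmCell h) (one_sub_mem_symmCell h₂) (h.resolve_left hcell)
  exact eq_of_mem_cell ha hR hα hp hp₂ hcell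
    (h₂.resolve_right (one_sub_notMem_cell ha hR hα hp hp₂ hcell))

lemma disjoint_cell_preimage_one_sub (ha : 1 ≤ a) (hR : 0 < R)
    (hp : p ∈ denominatorPairs a b R) : Disjoint (cell p) ((1 - ·) ⁻¹' cell p) :=
  disjoint_of_isOpen_of_irrational isOpen_Ioo (isOpen_preimage_one_sub_cell p)
    fun _ hα h => one_sub_notMem_cell ha hR hα hp hp h

lemma pairwise_disjoint_symmCell (ha : 1 ≤ a) (hR : 0 < R) :
    (denominatorPairs a b R : Set (ℕ × ℕ)).Pairwise (Function.onFun Disjoint symmCell) :=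
  fun p hp p₂ hp₂ hne => disjoint_of_isOpen_of_irrational (isOpen_symmCell p) (isOpen_symmCell p₂)
    fun _ hα h h₂ => hne (eq_of_mem_symmCell ha hR hα hp hp₂ h h₂)

lemma cell_subset_of_mem_denominatorPairs (ha : 1 ≤ a) (hR : 0 < R)
    (hp : p ∈ denominatorPairs a b R) : cell p ⊆ Ioo 0 1 := by
  obtain ⟨hq, hqn, hcop⟩ := bounds_of_mem_denominatorPairs ha hR hp hp
  exact cell_subset (by omega) hcop

lemma symmCell_subset (ha : 1 ≤ a) (hR : 0 < R) (hp : p ∈ denominatorPairs a b R) :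
    symmCell p ⊆ Ioo 0 1 := by
  have hcell := cell_subset_of_mem_denominatorPairs ha hR hp
  refine union_subset hcell fun α hα => ?_
  have := hcell hα
  exact ⟨sub_lt_self_iff 1 |>.1 this.2, sub_pos.1 this.1⟩

lemma mem_convergentSet_iff (ha : 1 ≤ a) (hR : 1 ≤ R) (h0 : α ∈ Ioo (0 : ℝ) 1)
    (hα : Irrational α) :
    α ∈ convergentSet a b R ↔ ∃ p ∈ denominatorPairs a b R, α ∈ symmCell p := by
  have hR0 : 0 < R := one_pos.trans_le hR
  obtain ⟨q, hq, hn, hcop, hmem⟩ := exists_mem_symmCell h0 hα hR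
  set n := qden (pq α) (nIndex α R)
  have mem_iff : α ∈ convergentSet a b R ↔ a * R < n ∧ (n : ℝ) < b * R := by
    rw [← lt_div_iff₀ hR0, ← div_lt_iff₀ hR0]
    exact ⟨fun h => h.2.2, fun h => ⟨h0, hα, h⟩⟩
  rw [mem_iff]
  constructor
  · exact fun h => ⟨(n, q), (mem_denominatorPairs (by linarith) hR0.le).2 ⟨h, hq, hcop⟩, hmem⟩
  · rintro ⟨p, hp, hmem_p⟩
    rw [mem_denominatorPairs (by linarith) hR0.le] at hp
    let B := max b (n / R + 1)
    have n_lt : n < B * R := by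
      rw [← div_lt_iff₀ hR0]
      exact (lt_add_one _).trans_le (le_max_right _ _)
    have hp' : p ∈ denominatorPairs 1 B R := (mem_denominatorPairs zero_le_one hR0.le).2
      ⟨⟨by nlinarith [hp.1.1], hp.1.2.trans_le (by gcongr; exact le_max_left _ _)⟩, hp.2⟩
    have hnq : (n, q) ∈ denominatorPairs 1 B R := (mem_denominatorPairs zero_le_one hR0.le).2
      ⟨⟨by simpa using hn, n_lt⟩, hq, hcop⟩
    rw [eq_of_mem_symmCell le_rfl hR0 hα hp' hnq hmem_p hmem] at hp
    exact hp.1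

lemma convergentSet_ae_eq (ha : 1 ≤ a) (hR : 1 ≤ R) :
    convergentSet a b R =ᵐ[volume] ⋃ p ∈ denominatorPairs a b R, symmCell p := by
  rw [eventuallyEq_set]
  filter_upwards [ae_irrational] with α hα
  rw [mem_iUnion₂]
  by_cases h0 : α ∈ Ioo (0 : ℝ) 1
  · simpa only [exists_prop] using mem_convergentSet_iff ha hR h0 hα
  · refine ⟨fun h => absurd h.1 h0, ?_⟩
    rintro ⟨p, hp, h⟩
    exact absurd (symmCell_subset ha (by linarith) hp h) h0

end DenominatorPairs

/-! ### Integrals over the cells -/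

lemma volume_real_cell (p : ℕ × ℕ) : volume.real (cell p) = cellLength p := by
  rw [cell, Real.volume_real_Ioo, sub_sub_cancel, max_eq_left (cellLength_nonneg p)]

lemma setIntegral_preimage_one_sub_cell (f : ℝ → ℝ) (p : ℕ × ℕ) :
    ∫ x in (1 - ·) ⁻¹' cell p, f x = ∫ x in cell p, f (1 - x) := by
  have := (volume.measurePreserving_sub_left (1 : ℝ)).setIntegral_preimage_emb
    (Homeomorph.subLeft (1 : ℝ)).measurableEmbedding (fun x => f (1 - x)) (cell p)
  simpa only [sub_sub_cancel] using this

lemma setIntegral_convergentSet {a b R : ℝ} (ha : 1 ≤ a) (hR : 1 ≤ R) {f : ℝ → ℝ}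
    (hf : IntegrableOn f (Ioo 0 1)) :
    ∫ x in convergentSet a b R, f x =
      ∑ p ∈ denominatorPairs a b R, ∫ x in cell p, (f x + f (1 - x)) := by
  have hR0 : 0 < R := one_pos.trans_le hR
  rw [Measure.restrict_congr_set (convergentSet_ae_eq ha hR),
    integral_biUnion_finset _ (fun p _ => (isOpen_symmCell p).measurableSet)
      (pairwise_disjoint_symmCell ha hR0)
      fun p hp => hf.mono_set (symmCell_subset ha hR0 hp)]
  refine Finset.sum_congr rfl fun p hp => ?_
  have integrable := hf.mono_set (symmCell_subset ha hR0 hp)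
  have integrable_reflect : IntegrableOn (fun x => f (1 - x)) (cell p) := by
    rw [← (volume.measurePreserving_sub_left (1 : ℝ)).integrableOn_comp_preimage
      (Homeomorph.subLeft (1 : ℝ)).measurableEmbedding]
    simpa [Function.comp_def] using integrable.mono_set subset_union_right
  rw [symmCell, setIntegral_union (disjoint_cell_preimage_one_sub ha hR0 hp)
      (isOpen_preimage_one_sub_cell p).measurableSet (integrable.mono_set subset_union_left)
      (integrable.mono_set subset_union_right),
    setIntegral_preimage_one_sub_cell,
    integral_add (integrable.mono_set subset_union_left) integrable_reflect]

lemma haarAddCircle_eq_volume : (AddCircle.haarAddCircle : Measure UnitAddCircle) = volume := by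
  rw [AddCircle.volume_eq_smul_haarAddCircle, ENNReal.ofReal_one, one_smul]

lemma tendsto_sum_cellLength_mul {a b : ℝ} (ha : 1 ≤ a) (hab : a ≤ b) {f : ℝ → ℝ}
    (hf : ContinuousOn f (Icc 0 1)) (hf01 : f 0 = f 1) :
    Tendsto (fun R => ∑ p ∈ denominatorPairs a b R, cellLength p * f (invMod p.2 p.1 / p.1)) atTop
      (𝓝 (6 / Real.pi ^ 2 * (∫ s in a..b, Real.log (1 + 1 / s) / s) * ∫ x in (0 : ℝ)..1, f x)) := by
  let g : ℝ → ℂ := fun x => f x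
  let F : C(UnitAddCircle, ℂ) := ⟨AddCircle.liftIco 1 0 g, AddCircle.liftIco_zero_continuous
    (congrArg ((↑) : ℝ → ℂ) hf01) (Complex.continuous_ofReal.comp_continuousOn hf)⟩
  have F_apply {x : ℝ} (hx : x ∈ Ico (0 : ℝ) 1) : F x = f x :=
    AddCircle.liftIco_zero_coe_apply (f := g) hx
  have integral_F : ∫ y, F y ∂AddCircle.haarAddCircle = ((∫ x in (0 : ℝ)..1, f x : ℝ) : ℂ) := by
    rw [haarAddCircle_eq_volume, ← UnitAddCircle.intervalIntegral_preimage 0, zero_add,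
      ← intervalIntegral.integral_ofReal]
    refine intervalIntegral.integral_congr_Ioo_of_le zero_le_one fun x hx => ?_
    exact F_apply ⟨hx.1.le, hx.2⟩
  have discrepancy_re {R : ℝ} (hR : 0 < R) : (discrepancy (denominatorPairs a b R) cellLength
      (fun p => ((invMod p.2 p.1 / p.1 : ℝ) : UnitAddCircle)) F).re =
      ∑ p ∈ denominatorPairs a b R,
        cellLength p * (f (invMod p.2 p.1 / p.1) - ∫ x in (0 : ℝ)..1, f x) := by
    rw [discrepancy_apply, integral_F, Complex.re_sum]
    refine Finset.sum_congr rfl fun p hp => ?_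
    obtain ⟨hq, hqn, -⟩ := bounds_of_mem_denominatorPairs ha hR hp hp
    rw [F_apply (invMod_div_mem_Ico _ (by omega)), ← Complex.ofReal_sub, ← Complex.ofReal_mul,
      Complex.ofReal_re]
  have h := (Complex.continuous_re.tendsto _).comp
    (tendsto_discrepancy_invMod ha (by linarith) F (b := b))
  have hsum := ((tendsto_sum_cellLength (by linarith) hab).mul_const (∫ x in (0 : ℝ)..1, f x)).add h
  rw [Complex.zero_re, add_zero] at hsum
  refine hsum.congr' ?_
  filter_upwards [eventually_gt_atTop 0] with R hR
  rw [Function.comp_apply, discrepancy_re hR, Finset.sum_mul, ← Finset.sum_add_distrib]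
  exact Finset.sum_congr rfl fun p _ => by ring

lemma abs_setIntegral_cell_sub_le {f : ℝ → ℝ} {p : ℕ × ℕ} {c ε : ℝ}
    (hf : IntegrableOn f (cell p)) (h : ∀ x ∈ cell p, |f x - c| ≤ ε) :
    |(∫ x in cell p, f x) - cellLength p * c| ≤ ε * cellLength p := by
  have finite : volume (cell p) < ⊤ := measure_Ioo_lt_top
  have : (∫ x in cell p, f x) - cellLength p * c = ∫ x in cell p, (f x - c) := by
    rw [integral_sub hf (integrableOn_const finite.ne), setIntegral_const, volume_real_cell,
      smul_eq_mul]
  rw [this, ← volume_real_cell]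
  exact norm_setIntegral_le_of_norm_le_const (f := fun x => f x - c) finite h

lemma tendsto_sum_setIntegral_cell_sub {a b : ℝ} (ha : 1 ≤ a) (hb : 0 ≤ b) {f : ℝ → ℝ}
    (hf : ContinuousOn f (Icc 0 1)) :
    Tendsto (fun R => ∑ p ∈ denominatorPairs a b R,
      ((∫ x in cell p, f x) - cellLength p * f (invMod p.2 p.1 / p.1))) atTop (𝓝 0) := by
  have hunif := isCompact_Icc.uniformContinuousOn_of_continuous hf
  rw [Metric.uniformContinuousOn_iff] at hunif
  rw [Metric.tendsto_atTop]
  intro ε hε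
  obtain ⟨δ, hδ, hfδ⟩ := hunif (ε / (b + 1)) (by positivity)
  have eventually_small : ∀ᶠ R : ℝ in atTop, 1 / R ^ 2 < δ := by
    have := (tendsto_pow_atTop (α := ℝ) two_ne_zero).const_div_atTop 1
    exact this.eventually_lt_const hδ
  obtain ⟨R₀, hR₀⟩ := eventually_atTop.1 eventually_small
  refine ⟨max 1 R₀, fun R hR => ?_⟩
  have hR0 : 0 < R := one_pos.trans_le (le_of_max_le_left hR)
  have close {p} (hp : p ∈ denominatorPairs a b R) (x) (hx : x ∈ cell p) :
      |f x - f (invMod p.2 p.1 / p.1)| ≤ ε / (b + 1) := by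
    obtain ⟨hq, hqn, -⟩ := bounds_of_mem_denominatorPairs ha hR0 hp hp
    have hlen := (cellLength_le ha hR0 hp).trans_lt (hR₀ R (le_of_max_le_right hR))
    refine (hfδ x (Ioo_subset_Icc_self (cell_subset_of_mem_denominatorPairs ha hR0 hp hx)) _
      (Ico_subset_Icc_self (invMod_div_mem_Ico _ (by omega))) ?_).le
    rw [Real.dist_eq, abs_lt]
    constructor <;> linarith [hx.1, hx.2, cellLength_nonneg p]
  rw [dist_zero_right, Real.norm_eq_abs]
  calc |∑ p ∈ denominatorPairs a b R,
        ((∫ x in cell p, f x) - cellLength p * f (invMod p.2 p.1 / p.1))|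
      ≤ ∑ p ∈ denominatorPairs a b R, ε / (b + 1) * cellLength p :=
        (Finset.abs_sum_le_sum_abs _ _).trans <| Finset.sum_le_sum fun p hp =>
          abs_setIntegral_cell_sub_le (hf.integrableOn_Icc.mono_set
            ((cell_subset_of_mem_denominatorPairs ha hR0 hp).trans Ioo_subset_Icc_self)) (close hp)
    _ ≤ ε / (b + 1) * b := by
        rw [← Finset.mul_sum]
        gcongr
        exact sum_cellLength_le ha hb R
    _ = b / (b + 1) * ε := by ring
    _ < ε := mul_lt_of_lt_one_left hε ((div_lt_one (by positivity)).2 (by linarith))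

lemma tendsto_sum_setIntegral_cell {a b : ℝ} (ha : 1 ≤ a) (hab : a ≤ b) {f : ℝ → ℝ}
    (hf : ContinuousOn f (Icc 0 1)) (hf01 : f 0 = f 1) :
    Tendsto (fun R => ∑ p ∈ denominatorPairs a b R, ∫ x in cell p, f x) atTop
      (𝓝 (6 / Real.pi ^ 2 * (∫ s in a..b, Real.log (1 + 1 / s) / s) * ∫ x in (0 : ℝ)..1, f x)) := by
  have h := (tendsto_sum_setIntegral_cell_sub ha (by linarith) hf (b := b)).add
    (tendsto_sum_cellLength_mul ha hab hf hf01)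
  rw [zero_add] at h
  refine h.congr fun R => ?_
  rw [← Finset.sum_add_distrib]
  simp only [sub_add_cancel]

/-! ### The Gauss measure -/

/-- The density of the Gauss measure. -/
noncomputable def gaussDensity (x : ℝ) : ℝ := 1 / (Real.log 2 * (1 + x))

lemma continuousOn_gaussDensity : ContinuousOn gaussDensity (Icc 0 1) :=
  continuousOn_const.div (by fun_prop) fun x hx =>
    mul_ne_zero (Real.log_pos one_lt_two).ne' (by linarith [hx.1])

lemma toReal_gaussMeasure {s : Set ℝ} (hs : s ⊆ Ioo 0 1) :
    (gaussMeasure s).toReal = ∫ x in s, gaussDensity x := by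
  rw [gaussMeasure, withDensity_apply', Measure.restrict_restrict' measurableSet_Ioo,
    inter_eq_left.2 hs, integral_eq_lintegral_of_nonneg_ae]
  · rfl
  · filter_upwards [ae_restrict_of_ae_restrict_of_subset hs
      (ae_restrict_mem measurableSet_Ioo)] with x hx
    have := hx.1
    have := Real.log_pos one_lt_two
    rw [gaussDensity]
    positivity
  · have : Measurable gaussDensity := by unfold gaussDensity; fun_prop
    exact this.aestronglyMeasurable

lemma integral_gaussDensity : ∫ x in (0 : ℝ)..1, gaussDensity x = 1 := by
  have hlog : Real.log 2 ≠ 0 := (Real.log_pos one_lt_two).ne'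
  simp only [gaussDensity, ← one_div_mul_one_div]
  rw [intervalIntegral.integral_const_mul,
    intervalIntegral.integral_comp_add_left (fun x : ℝ => 1 / x), add_zero, one_add_one_eq_two,
    integral_one_div_of_pos one_pos two_pos, div_one, one_div_mul_cancel hlog]

lemma tendsto_gaussMeasure_convergentSet {a b : ℝ} (ha : 1 ≤ a) (hab : a ≤ b) :
    Tendsto (fun R => (gaussMeasure (convergentSet a b R)).toReal) atTop
      (𝓝 (12 / Real.pi ^ 2 * ∫ s in a..b, Real.log (1 + 1 / s) / s)) := by
  have maps_one_sub : MapsTo (fun x : ℝ => 1 - x) (Icc 0 1) (Icc 0 1) :=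
    fun x hx => ⟨sub_nonneg.2 hx.2, sub_le_self 1 hx.1⟩
  have continuousOn_reflect : ContinuousOn (fun x => gaussDensity (1 - x)) (Icc 0 1) :=
    continuousOn_gaussDensity.comp (by fun_prop) maps_one_sub
  have integral_symm : ∫ x in (0 : ℝ)..1, (gaussDensity x + gaussDensity (1 - x)) = 2 := by
    rw [intervalIntegral.integral_add
        (continuousOn_gaussDensity.intervalIntegrable_of_Icc zero_le_one)
        (continuousOn_reflect.intervalIntegrable_of_Icc zero_le_one),
      intervalIntegral.integral_comp_sub_left, sub_self, sub_zero, integral_gaussDensity]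
    norm_num
  have h := tendsto_sum_setIntegral_cell ha hab
    (continuousOn_gaussDensity.add continuousOn_reflect) (by simp [add_comm])
  simp only [Pi.add_apply, integral_symm] at h
  rw [show 12 / Real.pi ^ 2 * ∫ s in a..b, Real.log (1 + 1 / s) / s =
    6 / Real.pi ^ 2 * (∫ s in a..b, Real.log (1 + 1 / s) / s) * 2 by ring]
  refine h.congr' ?_
  filter_upwards [eventually_ge_atTop 1] with R hR
  rw [toReal_gaussMeasure fun α hα => hα.1, setIntegral_convergentSet ha hR]
  exact continuousOn_gaussDensity.integrableOn_Icc.mono_set Ioo_subset_Icc_self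

/-! ### Layer cake formulas -/

section LayerCake

variable {Ω : Type*} [MeasurableSpace Ω] {μ : Measure Ω} {f : Ω → ℝ}

lemma integral_eq_integral_measureReal_lt (hf : 0 ≤ᵐ[μ] f) (hfm : AEMeasurable f μ)
    (hfin : ∀ t, 0 < t → μ {ω | t < f ω} ≠ ⊤) :
    ∫ ω, f ω ∂μ = ∫ t in Ioi 0, μ.real {ω | t < f ω} := by
  have tail_antitone : Antitone fun t => μ {ω | t < f ω} :=
    fun s t hst => measure_mono fun ω hω => hst.trans_lt hω
  rw [integral_eq_lintegral_of_nonneg_ae hf hfm.aestronglyMeasurable,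
    lintegral_eq_lintegral_meas_lt μ hf hfm, integral_eq_lintegral_of_nonneg_ae
      (ae_of_all _ fun t => measureReal_nonneg)
      tail_antitone.measurable.ennreal_toReal.aestronglyMeasurable]
  congr 1
  exact setLIntegral_congr_fun measurableSet_Ioi fun t ht =>
    (ofReal_measureReal (hfin t ht)).symm

lemma lt_max_sub_sub_max_sub_iff {u A B t : ℝ} (ht : 0 < t) :
    t < max 0 (u - A) - max 0 (u - B) ↔ t < B - A ∧ A + t < u := by
  grind

lemma integral_max_sub_sub_max_sub {A B : ℝ} (hAB : A ≤ B) (hfm : AEMeasurable f μ)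
    (hfin : ∀ t, A < t → μ {ω | t < f ω} ≠ ⊤) :
    ∫ ω, (max 0 (f ω - A) - max 0 (f ω - B)) ∂μ = ∫ t in A..B, μ.real {ω | t < f ω} := by
  have tail_eq {t : ℝ} (ht : 0 < t) :
      {ω | t < max 0 (f ω - A) - max 0 (f ω - B)} = {ω | t < B - A ∧ A + t < f ω} :=
    Set.ext fun ω => lt_max_sub_sub_max_sub_iff ht
  have tail_indicator : EqOn (fun t => μ.real {ω | t < max 0 (f ω - A) - max 0 (f ω - B)})
      ((Iio (B - A)).indicator fun t => μ.real {ω | A + t < f ω}) (Ioi 0) := by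
    intro t ht
    by_cases h : t < B - A <;> simp [tail_eq ht, h]
  rw [integral_eq_integral_measureReal_lt
      (ae_of_all _ fun ω => sub_nonneg.2 (max_le_max_left 0 (sub_le_sub_left hAB _)))
      (by fun_prop),
    setIntegral_congr_fun measurableSet_Ioi tail_indicator, setIntegral_indicator measurableSet_Iio,
    Ioi_inter_Iio, ← integral_Ioc_eq_integral_Ioo,
    ← intervalIntegral.integral_of_le (sub_nonneg.2 hAB),
    intervalIntegral.integral_comp_add_left (fun t => μ.real {ω | t < f ω}), add_zero,
    add_sub_cancel]
  intro t ht
  rw [tail_eq ht]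
  exact measure_ne_top_of_subset (fun ω hω => hω.2) (hfin (A + t) (lt_add_of_pos_right A ht))

end LayerCake

/-! ### The distribution of the roof function -/

lemma Dset_ae_eq : Dset =ᵐ[volume] Ioc (0 : ℝ) 1 ×ˢ Ioc (0 : ℝ) 1 := by
  have ae_eq : (Ioo (0 : ℝ) 1 ∩ {x | Irrational x} : Set ℝ) =ᵐ[volume] Ioc (0 : ℝ) 1 :=
    (inter_ae_eq_left_of_ae_eq_univ (eventuallyEq_univ.2 ae_irrational)).trans Ioo_ae_eq_Ioc
  have Dset_eq : Dset = (Ioo (0 : ℝ) 1 ∩ {x | Irrational x}) ×ˢ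
      (Ioo (0 : ℝ) 1 ∩ {x | Irrational x}) :=
    Set.ext fun p => and_assoc.symm
  rw [Dset_eq]
  exact Measure.set_prod_ae_eq ae_eq ae_eq

lemma measurable_roof : Measurable roof := by
  unfold roof
  fun_prop

lemma mu2_apply {s : Set (ℝ × ℝ)} (hs : MeasurableSet s) :
    mu2 s = ∫⁻ x in Ioc (0 : ℝ) 1, ∫⁻ y in Prod.mk x ⁻¹' s ∩ Ioc 0 1,
      ENNReal.ofReal (1 / (Real.log 2 * (1 + x * y) ^ 2)) := by
  have density_measurable : Measurable fun p : ℝ × ℝ =>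
      ENNReal.ofReal (1 / (Real.log 2 * (1 + p.1 * p.2) ^ 2)) := by fun_prop
  rw [mu2, withDensity_apply _ hs, Measure.restrict_congr_set Dset_ae_eq, Measure.volume_eq_prod,
    ← Measure.prod_restrict, ← lintegral_indicator hs,
    lintegral_prod _ (density_measurable.indicator hs).aemeasurable]
  refine lintegral_congr fun x => ?_
  have slice_measurable : MeasurableSet (Prod.mk x ⁻¹' s) := measurable_prodMk_left hs
  rw [← Measure.restrict_restrict slice_measurable, ← lintegral_indicator slice_measurable]
  rfl

lemma lintegral_density_Ioc {x c : ℝ} (hx : 0 ≤ x) (hc : 0 ≤ c) :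
    ∫⁻ y in Ioc 0 c, ENNReal.ofReal (1 / (Real.log 2 * (1 + x * y) ^ 2)) =
      ENNReal.ofReal (c / (Real.log 2 * (1 + x * c))) := by
  have := Real.log_pos one_lt_two
  have pos {y : ℝ} (hy : y ∈ uIcc 0 c) : 0 < 1 + x * y := by
    rw [uIcc_of_le hc] at hy
    have := mul_nonneg hx hy.1
    linarith
  have continuousOn_density :
      ContinuousOn (fun y => 1 / (Real.log 2 * (1 + x * y) ^ 2)) (uIcc 0 c) :=
    continuousOn_const.div (by fun_prop) fun y hy => by have := pos hy; positivity
  have hasDerivAt {y : ℝ} (hy : y ∈ uIcc 0 c) : HasDerivAt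
      (fun y => y / (Real.log 2 * (1 + x * y))) (1 / (Real.log 2 * (1 + x * y) ^ 2)) y := by
    have hden : HasDerivAt (fun y => Real.log 2 * (1 + x * y)) (Real.log 2 * (x * 1)) y :=
      (((hasDerivAt_id y).const_mul x).const_add 1).const_mul _
    have := pos hy
    refine ((hasDerivAt_id y).div hden (by positivity)).congr_deriv ?_
    simp only [id]
    field_simp
    ring
  have integrable := continuousOn_density.intervalIntegrable (μ := volume)
  rw [← ofReal_integral_eq_lintegral_ofReal
      ((intervalIntegrable_iff_integrableOn_Ioc_of_le hc).1 integrable)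
      (ae_of_all _ fun y => by positivity),
    ← intervalIntegral.integral_of_le hc,
    intervalIntegral.integral_eq_sub_of_hasDerivAt (fun y hy => hasDerivAt hy) integrable, zero_div,
    sub_zero]

lemma lt_floor_one_div_add_iff {s x y : ℝ} (hxs : x ≤ s) (hy : 0 < y) :
    s < ⌊1 / y⌋ + x ↔ y ≤ 1 / (⌊s - x⌋ + 1) := by
  have := Int.floor_nonneg.2 (sub_nonneg.2 hxs)
  rw [← sub_lt_iff_lt_add, ← Int.floor_lt, Int.lt_iff_add_one_le, Int.le_floor, Int.cast_add,
    Int.cast_one, le_one_div (by positivity) hy]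

lemma roof_slice {t x : ℝ} (ht : 0 ≤ t) (hx : x ∈ Ioc (0 : ℝ) 1) :
    Prod.mk x ⁻¹' {p | t < roof p} ∩ Ioc 0 1 = Ioc 0 (1 / ((⌊Real.exp t - x⌋ : ℝ) + 1)) := by
  have hxt : x ≤ Real.exp t := hx.2.trans (Real.one_le_exp ht)
  have hfloor : (0 : ℝ) ≤ ⌊Real.exp t - x⌋ :=
    Int.cast_nonneg (Int.floor_nonneg.2 (sub_nonneg.2 hxt))
  have le_one : 1 / ((⌊Real.exp t - x⌋ : ℝ) + 1) ≤ 1 := (div_le_one (by positivity)).2 (by linarith)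
  have lt_roof_iff {y : ℝ} (hy : 0 < y) :
      t < roof (x, y) ↔ y ≤ 1 / ((⌊Real.exp t - x⌋ : ℝ) + 1) := by
    have : (0 : ℝ) ≤ ⌊1 / y⌋ := Int.cast_nonneg (Int.floor_nonneg.2 (by positivity))
    rw [roof, Real.lt_log_iff_exp_lt (by linarith [hx.1]), lt_floor_one_div_add_iff hxt hy]
  ext y
  refine ⟨fun ⟨h, hy⟩ => ⟨hy.1, (lt_roof_iff hy.1).1 h⟩, fun hy => ⟨(lt_roof_iff hy.1).2 hy.2, ?_⟩⟩
  exact ⟨hy.1, hy.2.trans le_one⟩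

lemma integral_comp_fract_sub (g : ℝ → ℝ) (s : ℝ) :
    ∫ x in (0 : ℝ)..1, g (Int.fract (s - x)) = ∫ x in (0 : ℝ)..1, g x := by
  have periodic : Function.Periodic (fun x => g (Int.fract x)) 1 := fun x => by simp
  rw [intervalIntegral.integral_comp_sub_left (fun x => g (Int.fract x))]
  calc ∫ x in s - 1..s - 0, g (Int.fract x)
      = ∫ x in s - 1..s - 1 + 1, g (Int.fract x) := by simp
    _ = ∫ x in (0 : ℝ)..0 + 1, g (Int.fract x) := periodic.intervalIntegral_add_eq _ _
    _ = ∫ x in (0 : ℝ)..1, g x := by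
        rw [zero_add]
        exact intervalIntegral.integral_congr_Ioo_of_le zero_le_one fun x hx => by
          simp only [Int.fract_eq_self.2 ⟨hx.1.le, hx.2⟩]

lemma integral_one_div_add_one_sub {s : ℝ} (hs : 0 < s) :
    ∫ x in (0 : ℝ)..1, 1 / (s + 1 - x) = Real.log (1 + 1 / s) := by
  rw [intervalIntegral.integral_comp_sub_left (fun x => 1 / x), add_sub_cancel_right, sub_zero,
    integral_one_div_of_pos hs (by linarith), add_div, div_self hs.ne']

lemma mu2_lt_roof {t : ℝ} (ht : 0 ≤ t) :
    mu2 {p | t < roof p} = ENNReal.ofReal (Real.log (1 + Real.exp (-t)) / Real.log 2) := by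
  have := Real.log_pos one_lt_two
  have hs : 0 < Real.exp t := Real.exp_pos t
  let g : ℝ → ℝ := fun w => 1 / (Real.exp t + 1 - w) / Real.log 2
  have slice_integral {x : ℝ} (hx : x ∈ Ioc (0 : ℝ) 1) :
      ∫⁻ y in Prod.mk x ⁻¹' {p | t < roof p} ∩ Ioc 0 1,
        ENNReal.ofReal (1 / (Real.log 2 * (1 + x * y) ^ 2)) =
      ENNReal.ofReal (g (Int.fract (Real.exp t - x))) := by
    have hx0 := hx.1
    have hfloor : (0 : ℝ) ≤ ⌊Real.exp t - x⌋ := Int.cast_nonneg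
      (Int.floor_nonneg.2 (sub_nonneg.2 (hx.2.trans (Real.one_le_exp ht))))
    have hden : Real.exp t + 1 - Int.fract (Real.exp t - x) = ⌊Real.exp t - x⌋ + 1 + x := by
      rw [Int.fract]
      ring
    rw [roof_slice ht hx, lintegral_density_Ioc hx0.le (by positivity)]
    simp only [g, hden]
    congr 1
    field_simp
  have bounds (x : ℝ) : 0 ≤ g (Int.fract x) ∧ g (Int.fract x) ≤ 1 / Real.exp t / Real.log 2 := by
    have := Int.fract_lt_one x
    have : 0 ≤ Real.exp t + 1 - Int.fract x := by linarith
    refine ⟨by positivity, ?_⟩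
    simp only [g]
    gcongr
    linarith
  have integrable : IntegrableOn (fun x => g (Int.fract (Real.exp t - x))) (Ioc 0 1) :=
    Measure.integrableOn_of_bounded measure_Ioc_lt_top.ne
      (by fun_prop : Measurable _).aestronglyMeasurable
      (ae_of_all _ fun x => (Real.norm_of_nonneg (bounds _).1).trans_le (bounds _).2)
  rw [mu2_apply (measurableSet_lt measurable_const measurable_roof),
    setLIntegral_congr_fun measurableSet_Ioc fun x hx => slice_integral hx,
    ← ofReal_integral_eq_lintegral_ofReal integrable (ae_of_all _ fun x => (bounds _).1),
    ← intervalIntegral.integral_of_le zero_le_one, integral_comp_fract_sub,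
    intervalIntegral.integral_div, integral_one_div_add_one_sub hs, one_div, ← Real.exp_neg]

lemma mu2_lt_roof_ne_top {t : ℝ} (ht : 0 ≤ t) : mu2 {p | t < roof p} ≠ ⊤ :=
  mu2_lt_roof ht ▸ ENNReal.ofReal_ne_top

lemma mu2_real_lt_roof {t : ℝ} (ht : 0 ≤ t) :
    mu2.real {p | t < roof p} = Real.log (1 + Real.exp (-t)) / Real.log 2 := by
  have := Real.log_nonneg (le_add_of_nonneg_right (a := 1) (Real.exp_pos (-t)).le)
  have := Real.log_pos one_lt_two
  rw [measureReal_def, mu2_lt_roof ht, ENNReal.toReal_ofReal (by positivity)]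

lemma ae_roof_nonneg : 0 ≤ᵐ[mu2] roof := by
  refine withDensity_absolutelyContinuous _ _ ?_
  rw [Measure.restrict_congr_set Dset_ae_eq]
  filter_upwards [ae_restrict_mem (measurableSet_Ioc.prod measurableSet_Ioc)] with p hp
  have one_le_floor : (1 : ℤ) ≤ ⌊1 / p.2⌋ := by
    rw [Int.le_floor, Int.cast_one]
    exact (one_le_div hp.2.1).2 hp.2.2
  have : (1 : ℝ) ≤ ⌊1 / p.2⌋ := by exact_mod_cast one_le_floor
  exact Real.log_nonneg (by linarith [hp.1.1])

/-! ### The integrals of the roof function -/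

lemma integral_log_one_add_exp_neg {a b : ℝ} (ha : 0 < a) (hb : 0 < b) :
    ∫ t in Real.log a..Real.log b, Real.log (1 + Real.exp (-t)) =
      ∫ s in a..b, Real.log (1 + 1 / s) / s := by
  have pos {s : ℝ} (hs : s ∈ uIcc a b) : 0 < s := (lt_inf_iff.2 ⟨ha, hb⟩).trans_le hs.1
  rw [← intervalIntegral.integral_comp_mul_deriv (fun s hs => Real.hasDerivAt_log (pos hs).ne')
    (continuousOn_inv₀.mono fun s hs => (pos hs).ne')
    (Continuous.log (by fun_prop) fun t => by positivity)]
  refine intervalIntegral.integral_congr fun s hs => ?_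
  simp only [Function.comp_apply]
  rw [Real.exp_neg, Real.exp_log (pos hs), one_div, div_eq_mul_inv]

lemma integral_roof_truncation {a b : ℝ} (ha : 1 ≤ a) (hab : a ≤ b) :
    ∫ p, (max 0 (roof p - Real.log a) - max 0 (roof p - Real.log b)) ∂mu2 =
      (∫ s in a..b, Real.log (1 + 1 / s) / s) / Real.log 2 := by
  have log_nonneg := Real.log_nonneg ha
  have log_le := Real.log_le_log (by linarith) hab
  rw [integral_max_sub_sub_max_sub log_le measurable_roof.aemeasurable
      fun t ht => mu2_lt_roof_ne_top (log_nonneg.trans ht.le),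
    ← integral_log_one_add_exp_neg (by linarith) (by linarith), ← intervalIntegral.integral_div]
  refine intervalIntegral.integral_congr fun t ht => mu2_real_lt_roof ?_
  rw [uIcc_of_le log_le] at ht
  exact log_nonneg.trans ht.1

lemma hasSum_neg_one_pow_div_succ_sq :
    HasSum (fun n : ℕ => (-1) ^ n / ((n : ℝ) + 1) ^ 2) (Real.pi ^ 2 / 12) := by
  have cos_series := hasSum_one_div_nat_pow_mul_cos one_ne_zero (x := 2⁻¹) (by norm_num)
  rw [show (Polynomial.map (algebraMap ℚ ℝ) (Polynomial.bernoulli (2 * 1))).eval 2⁻¹ =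
      (2 / 2 ^ 2 - 1) * bernoulli 2 from bernoulliFun_eval_half 2, bernoulli_two] at cos_series
  have shifted := ((hasSum_nat_add_iff' 1).2 cos_series).neg
  convert! shifted using 1
  · funext n
    rw [show 2 * Real.pi * ((n + 1 : ℕ) : ℝ) * 2⁻¹ = ((n + 1 : ℕ) : ℝ) * Real.pi by ring,
      Real.cos_nat_mul_pi]
    push_cast
    ring
  · norm_num
    ring

lemma hasSum_log_one_add_exp_neg {t : ℝ} (ht : 0 < t) :
    HasSum (fun n : ℕ => (-1) ^ n / ((n : ℝ) + 1) * Real.exp (-((n : ℝ) + 1) * t))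
      (Real.log (1 + Real.exp (-t))) := by
  have abs_lt : |-Real.exp (-t)| < 1 := by
    rw [abs_neg, Real.abs_exp, Real.exp_lt_one_iff]
    exact neg_lt_zero.2 ht
  have h := (Real.hasSum_pow_div_log_of_abs_lt_one abs_lt).neg
  rw [neg_neg, sub_neg_eq_add] at h
  refine h.congr_fun fun n => ?_
  rw [neg_pow (Real.exp (-t)), ← Real.exp_nat_mul,
    show ((n + 1 : ℕ) : ℝ) * -t = -((n : ℝ) + 1) * t by push_cast; ring]
  ring

lemma integral_Ioi_log_one_add_exp_neg :
    ∫ t in Ioi (0 : ℝ), Real.log (1 + Real.exp (-t)) = Real.pi ^ 2 / 12 := by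
  let F : ℕ → ℝ → ℝ := fun n t => (-1) ^ n / ((n : ℝ) + 1) * Real.exp (-((n : ℝ) + 1) * t)
  have neg_succ (n : ℕ) : -((n : ℝ) + 1) < 0 := by linarith [n.cast_nonneg (α := ℝ)]
  have integral_exp (n : ℕ) : ∫ t in Ioi (0 : ℝ), Real.exp (-((n : ℝ) + 1) * t) = 1 / (n + 1) := by
    rw [integral_exp_mul_Ioi (neg_succ n), mul_zero, Real.exp_zero, neg_div_neg_eq]
  have integrable (n : ℕ) : IntegrableOn (F n) (Ioi 0) :=
    (integrableOn_exp_mul_Ioi (neg_succ n) 0).const_mul _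
  have integral_F (n : ℕ) : ∫ t in Ioi 0, F n t = (-1) ^ n / ((n : ℝ) + 1) ^ 2 := by
    rw [integral_const_mul, integral_exp]
    field_simp
  have integral_norm_F (n : ℕ) : ∫ t in Ioi 0, ‖F n t‖ = ‖(-1) ^ n / ((n : ℝ) + 1) ^ 2‖ := by
    simp only [F, norm_mul, Real.norm_of_nonneg (Real.exp_pos _).le]
    rw [integral_const_mul, integral_exp, norm_div, norm_div, norm_pow _ 2,
      Real.norm_of_nonneg (by positivity : 0 ≤ (n : ℝ) + 1)]
    field_simp
  have h := hasSum_integral_of_summable_integral_norm integrable (by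
    simpa only [integral_norm_F] using hasSum_neg_one_pow_div_succ_sq.summable.norm)
  simp only [integral_F] at h
  rw [setIntegral_congr_fun measurableSet_Ioi fun t ht =>
    (hasSum_log_one_add_exp_neg ht).tsum_eq.symm]
  exact h.unique hasSum_neg_one_pow_div_succ_sq

lemma integral_roof : ∫ p, roof p ∂mu2 = Real.pi ^ 2 / (12 * Real.log 2) := by
  rw [integral_eq_integral_measureReal_lt ae_roof_nonneg measurable_roof.aemeasurable
      fun t ht => mu2_lt_roof_ne_top ht.le,
    setIntegral_congr_fun measurableSet_Ioi fun t ht => mu2_real_lt_roof (mem_Ioi.1 ht).le,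
    integral_div, integral_Ioi_log_one_add_exp_neg, div_div]

end ConvergentDenominators

/-- For all `1 < a < b`, the Gauss measure of
`{α ∈ (0,1) irrational : a < q_{n_R}(α)/R < b}` converges, as `R → ∞`, to
`(∫_D φ dμ₂)⁻¹ · ∫_D (max 0 (φ − ln a) − max 0 (φ − ln b)) dμ₂`. -/
theorem statement1 (a b : ℝ) (ha : 1 < a) (hab : a < b) :
    Filter.Tendsto
      (fun R : ℝ =>
        (gaussMeasure {α : ℝ | α ∈ Ioo (0 : ℝ) 1 ∧ Irrational α ∧
          a < (qden (pq α) (nIndex α R) : ℝ) / R ∧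
          (qden (pq α) (nIndex α R) : ℝ) / R < b}).toReal)
      Filter.atTop
      (nhds ((∫ p, roof p ∂mu2)⁻¹ *
        ∫ p, (max 0 (roof p - Real.log a) - max 0 (roof p - Real.log b)) ∂mu2)) := by
  rw [ConvergentDenominators.integral_roof,
    ConvergentDenominators.integral_roof_truncation ha.le hab.le]
  have limit_eq : (Real.pi ^ 2 / (12 * Real.log 2))⁻¹ *
      ((∫ s in a..b, Real.log (1 + 1 / s) / s) / Real.log 2) =
      12 / Real.pi ^ 2 * ∫ s in a..b, Real.log (1 + 1 / s) / s := by
    have log_two_ne_zero : Real.log 2 ≠ 0 := (Real.log_pos one_lt_two).ne'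
    field_simp
  rw [limit_eq]
  exact ConvergentDenominators.tendsto_gaussMeasure_convergentSet ha.le hab.le
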